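/- arXiv:2002.07295 — 3 statements merged into one kernel-verified Lean document; each statement's English description precedes it below -/
import Mathlib

section
/- Let g : ℝ → ℝ be a continuous, bounded, nonnegative, integrable function and let k > 0. Then there exists a function h, smooth on the open upper half-plane ℍ = {z ∈ ℂ : Im z > 0} and continuous on its closure, such that Δh = k·h on ℍ, h = g on ℝ, 0 ≤ h ≤ sup g everywhere, and there is a constant C > 0 (depending only on k) such that h(x + iy) ≤ C · ‖g‖_{L¹(ℝ)} · e^{−2√k · y} / √y for all x ∈ ℝ and y ≥ 1. -/
/-- The operator `Δ = ∂_z ∂_z̄ = (1/4)(∂²/∂x² + ∂²/∂y²)` acting on functions on `ℂ`. -/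
noncomputable def lap (u : ℂ → ℝ) (z : ℂ) : ℝ :=
  (1 / 4) * (iteratedFDeriv ℝ 2 u z ![1, 1] + iteratedFDeriv ℝ 2 u z ![Complex.I, Complex.I])

open Real Set Filter Topology MeasureTheory

theorem integral_pow_mul_exp_neg_mul_Ioi (n : ℕ) {r : ℝ} (hr : 0 < r) :
    ∫ u in Ioi (0 : ℝ), u ^ n * exp (-(r * u)) = n.factorial / r ^ (n + 1) := by
  have key := integral_rpow_mul_exp_neg_mul_Ioi (a := n + 1) (by positivity) hr
  rw [Gamma_nat_eq_factorial] at key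
  simp only [add_sub_cancel_right, rpow_natCast] at key
  rw [key, ← Nat.cast_add_one, rpow_natCast, one_div_pow, one_div_mul_eq_div]

theorem integrableOn_pow_mul_exp_neg_mul_Ioi (n : ℕ) {r : ℝ} (hr : 0 < r) :
    IntegrableOn (fun u : ℝ => u ^ n * exp (-(r * u))) (Ioi 0) :=
  .of_integral_ne_zero (by rw [integral_pow_mul_exp_neg_mul_Ioi n hr]; positivity)

/-- The `n`-th moment of `exp (-k / u)` against `exp (-ρ u)` on the positive half-line. -/
noncomputable def laplaceMoment (k : ℝ) (n : ℕ) (ρ : ℝ) : ℝ :=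
  ∫ u in Ioi (0 : ℝ), u ^ n * exp (-(ρ * u) - k / u)

section LaplaceMoment

variable {k : ℝ}

theorem pow_mul_exp_sub_le (hk : 0 ≤ k) (n : ℕ) {r ρ u : ℝ} (hr : r ≤ ρ) (hu : 0 < u) :
    u ^ n * exp (-(ρ * u) - k / u) ≤ u ^ n * exp (-(r * u)) := by
  have h1 : r * u ≤ ρ * u := by gcongr
  have h2 : 0 ≤ k / u := by positivity
  gcongr
  linarith

theorem integrableOn_laplaceMoment (hk : 0 ≤ k) (n : ℕ) {ρ : ℝ} (hρ : 0 < ρ) :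
    IntegrableOn (fun u : ℝ => u ^ n * exp (-(ρ * u) - k / u)) (Ioi 0) := by
  refine (integrableOn_pow_mul_exp_neg_mul_Ioi n hρ).mono' (by fun_prop) ?_
  filter_upwards [ae_restrict_mem measurableSet_Ioi] with u (hu : 0 < u)
  rw [norm_of_nonneg (by positivity)]
  exact pow_mul_exp_sub_le hk n le_rfl hu

theorem laplaceMoment_nonneg (n : ℕ) (ρ : ℝ) : 0 ≤ laplaceMoment k n ρ :=
  setIntegral_nonneg measurableSet_Ioi fun u (hu : 0 < u) => by positivity

theorem laplaceMoment_le (hk : 0 ≤ k) (n : ℕ) {ρ : ℝ} (hρ : 0 < ρ) :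
    laplaceMoment k n ρ ≤ n.factorial / ρ ^ (n + 1) := by
  rw [← integral_pow_mul_exp_neg_mul_Ioi n hρ]
  exact setIntegral_mono_on (integrableOn_laplaceMoment hk n hρ)
    (integrableOn_pow_mul_exp_neg_mul_Ioi n hρ) measurableSet_Ioi
    fun u hu => pow_mul_exp_sub_le hk n le_rfl hu

theorem hasDerivAt_laplaceMoment (hk : 0 ≤ k) (n : ℕ) {ρ : ℝ} (hρ : 0 < ρ) :
    HasDerivAt (laplaceMoment k n) (-laplaceMoment k (n + 1) ρ) ρ := by
  have key := (hasDerivAt_integral_of_dominated_loc_of_deriv_le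
    (μ := volume.restrict (Ioi (0 : ℝ))) (x₀ := ρ) (s := Ioi (ρ / 2))
    (F := fun ρ u => u ^ n * exp (-(ρ * u) - k / u))
    (F' := fun ρ u => -(u ^ (n + 1) * exp (-(ρ * u) - k / u)))
    (bound := fun u => u ^ (n + 1) * exp (-(ρ / 2 * u)))
    (Ioi_mem_nhds (by linarith)) (.of_forall fun x => by fun_prop)
    (integrableOn_laplaceMoment hk n hρ) (by fun_prop) ?_
    (integrableOn_pow_mul_exp_neg_mul_Ioi (n + 1) (half_pos hρ)) ?_).2
  · rwa [integral_neg] at key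
  · filter_upwards [ae_restrict_mem measurableSet_Ioi] with u (hu : 0 < u) x (hx : ρ / 2 < x)
    rw [norm_neg, norm_of_nonneg (by positivity)]
    exact pow_mul_exp_sub_le hk (n + 1) hx.le hu
  · refine .of_forall fun u x _ => ?_
    convert! ((((hasDerivAt_id x).mul_const u).neg.sub_const (k / u)).exp.const_mul (u ^ n)) using 1
    simp
    ring

theorem continuousOn_laplaceMoment (hk : 0 ≤ k) (n : ℕ) :
    ContinuousOn (laplaceMoment k n) (Ioi 0) :=
  fun _ hρ => (hasDerivAt_laplaceMoment hk n hρ).continuousAt.continuousWithinAt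

theorem laplaceMoment_two (hk : 0 ≤ k) {ρ : ℝ} (hρ : 0 < ρ) :
    ρ * laplaceMoment k 2 ρ = 2 * laplaceMoment k 1 ρ + k * laplaceMoment k 0 ρ := by
  have i0 := (integrableOn_laplaceMoment hk 0 hρ).const_mul k
  have i1 := (integrableOn_laplaceMoment hk 1 hρ).const_mul 2
  have i2 := (integrableOn_laplaceMoment hk 2 hρ).const_mul ρ
  have i3 : IntegrableOn (fun u : ℝ => 2 * (u ^ 1 * exp (-(ρ * u) - k / u)) +
      k * (u ^ 0 * exp (-(ρ * u) - k / u))) (Ioi 0) := i1.add i0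
  have bound : ∀ u : ℝ, 0 < u →
      u ^ 2 * exp (-(ρ * u) - k / u) ≤ u ^ 2 * exp (-(ρ * u)) :=
    fun u hu => pow_mul_exp_sub_le hk 2 le_rfl hu
  have key := integral_Ioi_of_hasDerivAt_of_tendsto (a := (0 : ℝ)) (m := 0)
    (f := fun u => u ^ 2 * exp (-(ρ * u) - k / u))
    (f' := fun u => 2 * (u ^ 1 * exp (-(ρ * u) - k / u)) + k * (u ^ 0 * exp (-(ρ * u) - k / u))
      - ρ * (u ^ 2 * exp (-(ρ * u) - k / u))) ?_ ?_ (i3.sub i2) ?_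
  · rw [integral_sub i3 i2, integral_add i1 i0, integral_const_mul, integral_const_mul,
      integral_const_mul] at key
    simp only [laplaceMoment]
    norm_num at key ⊢
    linarith
  · have h0 : Tendsto (fun u : ℝ => u ^ 2) (𝓝[≥] 0) (𝓝 0) :=
      ((continuous_pow 2).tendsto' (0 : ℝ) 0 (by simp)).mono_left nhdsWithin_le_nhds
    rw [ContinuousWithinAt, zero_pow two_ne_zero, zero_mul]
    refine squeeze_zero' (.of_forall fun u => by positivity) ?_ h0
    filter_upwards [self_mem_nhdsWithin] with u (hu : 0 ≤ u)
    have h1 : 0 ≤ ρ * u := by positivity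
    have h2 : 0 ≤ k / u := by positivity
    exact mul_le_of_le_one_right (sq_nonneg u) (exp_le_one_iff.2 (by linarith))
  · intro u (hu : 0 < u)
    have h1 : HasDerivAt (fun u => -(ρ * u) - k / u) (-ρ + k / u ^ 2) u := by
      convert! ((hasDerivAt_id u).const_mul ρ).neg.sub ((hasDerivAt_inv hu.ne').const_mul k) using 1
      field_simp
      simp
    convert! (hasDerivAt_pow 2 u).mul h1.exp using 1
    field_simp
    ring
  · refine squeeze_zero' ?_ ?_ (g := fun u => u ^ 2 * exp (-(ρ * u))) ?_
    · exact .of_forall fun u => by positivity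
    · filter_upwards [eventually_gt_atTop 0] with u hu using bound u hu
    · have := tendsto_rpow_mul_exp_neg_mul_atTop_nhds_zero 2 ρ hρ
      simpa using this

theorem laplaceMoment_zero_sq_le (hk : 0 < k) {y : ℝ} (hy : 1 ≤ y) :
    laplaceMoment k 0 (y ^ 2) ≤
      (√(2 * √k * π) + 4) * exp (-2 * √k * y) / (y * √y) := by
  set c := √k with hc
  have hc0 : 0 < c := sqrt_pos.2 hk
  have hck : c ^ 2 = k := sq_sqrt hk.le
  have hy0 : 0 < y := by linarith
  have hb : 0 < y ^ 3 / (2 * c) := by positivity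
  have iG : Integrable fun u : ℝ => exp (-(y ^ 3 / (2 * c)) * (u - c / y) ^ 2) :=
    (integrable_exp_neg_mul_sq hb).comp_sub_right (c / y)
  have hG : ∫ u : ℝ, exp (-(y ^ 3 / (2 * c)) * (u - c / y) ^ 2) = √(2 * c * π) / (y * √y) := by
    rw [integral_sub_right_eq_self (fun u : ℝ => exp (-(y ^ 3 / (2 * c)) * u ^ 2)),
      integral_gaussian, show π / (y ^ 3 / (2 * c)) = 2 * c * π / (y ^ 2 * y) by field_simp,
      sqrt_div (by positivity), sqrt_mul (sq_nonneg y) y, sqrt_sq hy0.le]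
  have iE := integrableOn_pow_mul_exp_neg_mul_Ioi 0 (show 0 < y ^ 2 / 4 by positivity)
  have hE := integral_pow_mul_exp_neg_mul_Ioi 0 (show 0 < y ^ 2 / 4 by positivity)
  simp only [pow_zero, one_mul, Nat.factorial_zero, Nat.cast_one, zero_add, pow_one] at iE hE
  have pointwise : ∀ u ∈ Ioi (0 : ℝ), u ^ 0 * exp (-(y ^ 2 * u) - k / u) ≤
      exp (-2 * c * y) *
        (exp (-(y ^ 3 / (2 * c)) * (u - c / y) ^ 2) + exp (-(y ^ 2 / 4 * u))) := by
    intro u (hu : 0 < u)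
    have e1 : -(y ^ 2 * u) - k / u = -2 * c * y + -((y * u - c) ^ 2 / u) := by
      rw [← hck]; field_simp; ring
    rw [e1, pow_zero, one_mul, exp_add]
    gcongr
    rcases le_total (y * u) (2 * c) with h | h
    · refine le_trans ?_ (le_add_of_nonneg_right (exp_pos _).le)
      rw [exp_le_exp, neg_mul, neg_le_neg_iff,
        show y ^ 3 / (2 * c) * (u - c / y) ^ 2 = (y * u - c) ^ 2 / (2 * c / y) by field_simp]
      gcongr
      rw [le_div_iff₀ hy0]; linarith
    · refine le_trans ?_ (le_add_of_nonneg_left (exp_pos _).le)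
      rw [exp_le_exp, neg_le_neg_iff, le_div_iff₀ hu]
      nlinarith
  have step : laplaceMoment k 0 (y ^ 2) ≤
      exp (-2 * c * y) * (√(2 * c * π) / (y * √y) + 1 / (y ^ 2 / 4)) := by
    calc laplaceMoment k 0 (y ^ 2)
        ≤ ∫ u in Ioi (0 : ℝ), exp (-2 * c * y) *
          (exp (-(y ^ 3 / (2 * c)) * (u - c / y) ^ 2) + exp (-(y ^ 2 / 4 * u))) :=
          setIntegral_mono_on (integrableOn_laplaceMoment hk.le 0 (by positivity))
            ((iG.integrableOn.add iE).const_mul _) measurableSet_Ioi pointwise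
      _ ≤ _ := by
          rw [integral_const_mul, integral_add iG.integrableOn iE, hE, ← hG]
          gcongr _ * (?_ + _)
          exact setIntegral_le_integral iG (.of_forall fun u => (exp_pos _).le)
  refine step.trans ?_
  have hs : √y ≤ y := by
    rw [sqrt_le_left hy0.le]; nlinarith
  have : 1 / (y ^ 2 / 4) ≤ 4 / (y * √y) := by
    rw [one_div_div, sq]
    gcongr
  calc _ ≤ exp (-2 * c * y) * (√(2 * c * π) / (y * √y) + 4 / (y * √y)) := by gcongr
    _ = _ := by ring

end LaplaceMoment

/-- The integral of `g` against `(x - t) ^ a` times the `n`-th Laplace moment at `|z - t| ^ 2`. -/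
noncomputable def convMoment (k : ℝ) (g : ℝ → ℝ) (a n : ℕ) (z : ℂ) : ℝ :=
  ∫ t, g t * ((z.re - t) ^ a * laplaceMoment k n ((z.re - t) ^ 2 + z.im ^ 2))

section ConvMoment

open Complex (reCLM imCLM)

variable {k : ℝ} {g : ℝ → ℝ}

theorem abs_pow_mul_laplaceMoment_le (hk : 0 ≤ k) {a n : ℕ} (han : a ≤ 2 * n + 2) {δ y : ℝ}
    (hδ : 0 < δ) (hy : δ ≤ y) (x : ℝ) :
    |x ^ a * laplaceMoment k n (x ^ 2 + y ^ 2)| ≤ n.factorial / δ ^ (2 * n + 2 - a) := by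
  have hy0 : 0 < y := hδ.trans_le hy
  have hρ : 0 < x ^ 2 + y ^ 2 := by positivity
  set r := √(x ^ 2 + y ^ 2) with hr
  have hr0 : 0 < r := sqrt_pos.2 hρ
  have hr2 : x ^ 2 + y ^ 2 = r ^ 2 := (sq_sqrt hρ.le).symm
  have hxr : |x| ≤ r := abs_le_sqrt (by linarith [sq_nonneg y])
  have hyr : δ ≤ r := hy.trans (le_sqrt_of_sq_le (by linarith [sq_nonneg x]))
  rw [abs_mul, abs_pow, abs_of_nonneg (laplaceMoment_nonneg _ _)]
  calc |x| ^ a * laplaceMoment k n (x ^ 2 + y ^ 2)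
      ≤ r ^ a * (n.factorial / (x ^ 2 + y ^ 2) ^ (n + 1)) := by
        gcongr
        · exact laplaceMoment_nonneg _ _
        · exact laplaceMoment_le hk n hρ
    _ = n.factorial / r ^ (2 * n + 2 - a) := by
        rw [hr2, ← pow_mul, show 2 * (n + 1) = (2 * n + 2 - a) + a by omega, pow_add]
        field_simp
    _ ≤ _ := by gcongr

theorem continuous_pow_mul_laplaceMoment (hk : 0 ≤ k) (a n : ℕ) {z : ℂ} (hz : 0 < z.im) :
    Continuous fun t : ℝ =>
      (z.re - t) ^ a * laplaceMoment k n ((z.re - t) ^ 2 + z.im ^ 2) :=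
  ((continuous_const.sub continuous_id).pow a).mul
    ((continuousOn_laplaceMoment hk n).comp_continuous (by fun_prop) fun t =>
      show 0 < (z.re - t) ^ 2 + z.im ^ 2 by positivity)

theorem integrable_convMoment (hk : 0 ≤ k) (hg : Integrable g) {a n : ℕ} (han : a ≤ 2 * n + 2)
    {z : ℂ} (hz : 0 < z.im) :
    Integrable fun t : ℝ =>
      g t * ((z.re - t) ^ a * laplaceMoment k n ((z.re - t) ^ 2 + z.im ^ 2)) :=
  hg.mul_bdd (continuous_pow_mul_laplaceMoment hk a n hz).aestronglyMeasurable
    (.of_forall fun t => abs_pow_mul_laplaceMoment_le hk han hz le_rfl (z.re - t))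

theorem hasFDerivAt_convMoment (hk : 0 ≤ k) (hg : Integrable g) {a n : ℕ}
    (han : a ≤ 2 * n + 2) {z : ℂ} (hz : 0 < z.im) :
    HasFDerivAt (convMoment k g a n)
      ((a * convMoment k g (a - 1) n z - 2 * convMoment k g (a + 1) (n + 1) z) • reCLM +
        (-2 * z.im * convMoment k g a (n + 1) z) • imCLM) z := by
  let P : ℕ → ℕ → ℂ → ℝ → ℝ := fun a n z t =>
    (z.re - t) ^ a * laplaceMoment k n ((z.re - t) ^ 2 + z.im ^ 2)
  let D : ℂ → ℝ → ℂ →L[ℝ] ℝ := fun z t =>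
    (g t * (a * P (a - 1) n z t - 2 * P (a + 1) (n + 1) z t)) • reCLM +
      (g t * (-2 * z.im * P a (n + 1) z t)) • imCLM
  have hP : ∀ {a n : ℕ}, a ≤ 2 * n + 2 → Integrable fun t => g t * P a n z t :=
    fun h => integrable_convMoment hk hg h hz
  have h1 : Integrable fun t => g t * (a * P (a - 1) n z t - 2 * P (a + 1) (n + 1) z t) := by
    convert! ((hP (a := a - 1) (n := n) (by omega)).const_mul (a : ℝ)).sub
      ((hP (a := a + 1) (n := n + 1) (by omega)).const_mul 2) using 2
    simp only [Pi.sub_apply]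
    ring
  have h2 : Integrable fun t => g t * (-2 * z.im * P a (n + 1) z t) := by
    convert! (hP (a := a) (n := n + 1) (by omega)).const_mul (-2 * z.im) using 2
    ring
  have hD_int : Integrable (D z) := (h1.smul_const reCLM).add (h2.smul_const imCLM)
  have hD : ∫ t, D z t = (a * convMoment k g (a - 1) n z - 2 * convMoment k g (a + 1) (n + 1) z) •
      reCLM + (-2 * z.im * convMoment k g a (n + 1) z) • imCLM := by
    rw [integral_add (h1.smul_const _) (h2.smul_const _), integral_smul_const, integral_smul_const]
    congr 2
    · simp only [convMoment, ← integral_const_mul]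
      rw [← integral_sub ((hP (by omega)).const_mul _) ((hP (by omega)).const_mul _)]
      congr 1 with t
      ring
    · simp only [convMoment, ← integral_const_mul]
      congr 1 with t
      ring
  rw [← hD]
  let δ := z.im / 2
  have hδ : 0 < δ := half_pos hz
  let U : Set ℂ := Complex.im ⁻¹' Ioo δ (2 * z.im)
  have hU : U ∈ 𝓝 z := (isOpen_Ioo.preimage Complex.continuous_im).mem_nhds
    ⟨half_lt_self hz, by linarith⟩
  have hUpos : ∀ {w : ℂ}, w ∈ U → 0 < w.im := fun hw => hδ.trans hw.1
  let B : ℕ → ℕ → ℝ := fun a n => n.factorial / δ ^ (2 * n + 2 - a)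
  have hB : ∀ {a n : ℕ}, a ≤ 2 * n + 2 → ∀ {w : ℂ}, w ∈ U → ∀ t, |P a n w t| ≤ B a n :=
    fun h w hw t => abs_pow_mul_laplaceMoment_le hk h hδ hw.1.le _
  refine hasFDerivAt_integral_of_dominated_of_fderiv_le (s := U) (F' := D)
    (bound := fun t => |g t| * (a * B (a - 1) n + 2 * B (a + 1) (n + 1) +
      2 * (2 * z.im) * B a (n + 1))) hU ?_ (hP han)
    hD_int.aestronglyMeasurable ?_
    (hg.abs.mul_const _) ?_
  · filter_upwards [hU] with w hw
    exact (integrable_convMoment hk hg han (hUpos hw)).aestronglyMeasurable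
  · refine .of_forall fun t w hw => ?_
    have b1 := hB (a := a - 1) (n := n) (by omega) hw t
    have b2 := hB (a := a + 1) (n := n + 1) (by omega) hw t
    have b3 := hB (a := a) (n := n + 1) (by omega) hw t
    have hw2 : |w.im| ≤ 2 * z.im := by rw [abs_of_pos (hUpos hw)]; exact hw.2.le
    refine (norm_add_le _ _).trans ?_
    rw [norm_smul, norm_smul, Complex.reCLM_norm, Complex.imCLM_norm, mul_one, mul_one,
      norm_mul, norm_mul, ← mul_add, Real.norm_eq_abs, Real.norm_eq_abs, Real.norm_eq_abs]
    gcongr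
    · refine (abs_sub _ _).trans ?_
      rw [abs_mul (a : ℝ), abs_mul 2, Nat.abs_cast, abs_two]
      gcongr
    · rw [abs_mul, abs_mul (-2), abs_neg, abs_two]
      gcongr
  · refine .of_forall fun t w hw => ?_
    have hw0 := hUpos hw
    have hx : HasFDerivAt (fun w : ℂ => w.re - t) reCLM w := reCLM.hasFDerivAt.sub_const t
    have hy : HasFDerivAt (fun w : ℂ => w.im) imCLM w := imCLM.hasFDerivAt
    have hφ := (hasDerivAt_laplaceMoment hk n
      (show 0 < (w.re - t) ^ 2 + w.im ^ 2 by positivity)).comp_hasFDerivAt w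
      ((hx.pow 2).add (hy.pow 2))
    refine (((hx.pow a).mul hφ).const_mul (g t)).congr_fderiv ?_
    ext1 v
    simp [D, P]
    ring

theorem contDiffOn_convMoment (hk : 0 ≤ k) (hg : Integrable g) {a n : ℕ}
    (han : a ≤ 2 * n + 2) :
    ContDiffOn ℝ (⊤ : ℕ∞) (convMoment k g a n) {z : ℂ | 0 < z.im} := by
  have hopen : IsOpen {z : ℂ | 0 < z.im} := isOpen_lt continuous_const Complex.continuous_im
  refine contDiffOn_infty.2 fun N => ?_
  induction N generalizing a n with
  | zero =>
    exact contDiffOn_zero.2 fun z hz =>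
      (hasFDerivAt_convMoment hk hg han hz).continuousAt.continuousWithinAt
  | succ N ih =>
    rw [Nat.cast_add, Nat.cast_one,
      contDiffOn_succ_iff_hasFDerivWithinAt_of_uniqueDiffOn hopen.uniqueDiffOn]
    refine ⟨by simp, _, ?_, fun z hz => (hasFDerivAt_convMoment hk hg han hz).hasFDerivWithinAt⟩
    have h1 := ih (a := a - 1) (n := n) (by omega)
    have h2 := ih (a := a + 1) (n := n + 1) (by omega)
    have h3 := ih (a := a) (n := n + 1) (by omega)
    have him : ContDiffOn ℝ N (fun z : ℂ => z.im) {z : ℂ | 0 < z.im} := imCLM.contDiff.contDiffOn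
    exact (((contDiffOn_const.mul h1).sub (contDiffOn_const.mul h2)).smul contDiffOn_const).add
      (((contDiffOn_const.mul him).mul h3).smul contDiffOn_const)

theorem convMoment_two (hk : 0 ≤ k) (hg : Integrable g) {z : ℂ} (hz : 0 < z.im) :
    convMoment k g 2 2 z + z.im ^ 2 * convMoment k g 0 2 z =
      2 * convMoment k g 0 1 z + k * convMoment k g 0 0 z := by
  have i22 := integrable_convMoment hk hg (a := 2) (n := 2) (by omega) hz
  have i02 := integrable_convMoment hk hg (a := 0) (n := 2) (by omega) hz
  have i01 := integrable_convMoment hk hg (a := 0) (n := 1) (by omega) hz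
  have i00 := integrable_convMoment hk hg (a := 0) (n := 0) (by omega) hz
  simp only [convMoment, ← integral_const_mul]
  rw [← integral_add i22 (i02.const_mul _), ← integral_add (i01.const_mul _) (i00.const_mul _)]
  congr 1 with t
  have := laplaceMoment_two hk (show 0 < (z.re - t) ^ 2 + z.im ^ 2 by positivity)
  linear_combination g t * this

theorem lap_eq_of_hasFDerivAt {u A B : ℂ → ℝ} {A' B' : ℂ →L[ℝ] ℝ} {z : ℂ}
    (hu : ∀ᶠ w in 𝓝 z, HasFDerivAt u (A w • reCLM + B w • imCLM) w)
    (hA : HasFDerivAt A A' z) (hB : HasFDerivAt B B' z) :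
    lap u z = 1 / 4 * (A' 1 + B' Complex.I) := by
  have h1 : fderiv ℝ u =ᶠ[𝓝 z] fun w => A w • reCLM + B w • imCLM :=
    hu.mono fun w hw => hw.fderiv
  have h2 : HasFDerivAt (fun w => A w • reCLM + B w • imCLM)
      (A'.smulRight reCLM + B'.smulRight imCLM) z := (hA.smul_const reCLM).add (hB.smul_const imCLM)
  simp only [lap, iteratedFDeriv_two_apply]
  rw [h1.fderiv_eq, h2.fderiv]
  simp

theorem lap_im_mul_convMoment (hk : 0 ≤ k) (hg : Integrable g) {z : ℂ} (hz : 0 < z.im) :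
    lap (fun w => w.im * convMoment k g 0 0 w) z = k * (z.im * convMoment k g 0 0 z) := by
  have hopen : IsOpen {z : ℂ | 0 < z.im} := isOpen_lt continuous_const Complex.continuous_im
  have him : ∀ w : ℂ, HasFDerivAt (fun w : ℂ => w.im) imCLM w := fun w => imCLM.hasFDerivAt
  have hF {a n : ℕ} (han : a ≤ 2 * n + 2) {w : ℂ} (hw : 0 < w.im) :=
    hasFDerivAt_convMoment hk hg han hw
  rw [lap_eq_of_hasFDerivAt
    (A := fun w => w.im * (-2 * convMoment k g 1 1 w))
    (B := fun w => convMoment k g 0 0 w + w.im * (w.im * (-2 * convMoment k g 0 1 w))) ?_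
    ((him z).mul ((hF (a := 1) (n := 1) (by omega) hz).const_mul _))
    ((hF (a := 0) (n := 0) (by omega) hz).add
      ((him z).mul ((him z).mul ((hF (a := 0) (n := 1) (by omega) hz).const_mul _))))]
  · simp
    linear_combination z.im * convMoment_two hk hg hz
  · filter_upwards [hopen.mem_nhds hz] with w hw
    refine ((him w).mul (hF (a := 0) (n := 0) (by omega) hw)).congr_fderiv ?_
    ext1 v
    simp
    ring

end ConvMoment

section HalfPlaneExtension

variable {k : ℝ} {g : ℝ → ℝ}

theorem laplaceMoment_zero_zero {ρ : ℝ} (hρ : 0 < ρ) : laplaceMoment 0 0 ρ = ρ⁻¹ := by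
  simpa [laplaceMoment] using integral_pow_mul_exp_neg_mul_Ioi 0 hρ

theorem laplaceMoment_zero_scale {y : ℝ} (hy : 0 < y) (ρ : ℝ) :
    laplaceMoment (k * y ^ 2) 0 ρ = y ^ 2 * laplaceMoment k 0 (y ^ 2 * ρ) := by
  have := integral_comp_mul_left_Ioi' (fun u => exp (-(ρ * u) - k * y ^ 2 / u)) 0
    (show 0 < y ^ 2 by positivity)
  simp only [mul_zero, smul_eq_mul] at this
  simp only [laplaceMoment, pow_zero, one_mul, ← this]
  congr 2 with u
  rw [mul_comm (y ^ 2) u, mul_div_mul_right _ _ (by positivity)]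
  ring_nf

theorem laplaceMoment_zero_one_add_sq_le (hk : 0 ≤ k) (τ : ℝ) :
    laplaceMoment k 0 (1 + τ ^ 2) ≤ (1 + τ ^ 2)⁻¹ := by
  simpa using laplaceMoment_le hk 0 (show 0 < 1 + τ ^ 2 by positivity)

theorem continuous_laplaceMoment_zero_one_add_sq (hk : 0 ≤ k) :
    Continuous fun p : ℝ × ℝ => laplaceMoment (k * p.2 ^ 2) 0 (1 + p.1 ^ 2) := by
  refine continuous_of_dominated (bound := fun u => u ^ 0 * exp (-(1 * u)))
    (fun p => by fun_prop) (fun p => ?_) (integrableOn_pow_mul_exp_neg_mul_Ioi 0 one_pos)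
    (.of_forall fun u => by fun_prop)
  filter_upwards [ae_restrict_mem measurableSet_Ioi] with u (hu : 0 < u)
  rw [norm_of_nonneg (by positivity)]
  exact pow_mul_exp_sub_le (by positivity) 0 (by linarith [sq_nonneg p.1]) hu

/-- The (unnormalised) decaying extension of `g` to the upper half-plane solving `Δh = k h`. -/
noncomputable def halfPlaneExtension (k : ℝ) (g : ℝ → ℝ) (z : ℂ) : ℝ :=
  ∫ τ, laplaceMoment (k * z.im ^ 2) 0 (1 + τ ^ 2) * g (z.re - z.im * τ)

theorem continuous_halfPlaneExtension (hk : 0 ≤ k) (hg : Continuous g) {M : ℝ}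
    (hM : ∀ x, |g x| ≤ M) : Continuous (halfPlaneExtension k g) := by
  have hL := continuous_laplaceMoment_zero_one_add_sq hk
  refine continuous_of_dominated (bound := fun τ => (1 + τ ^ 2)⁻¹ * M)
    (fun z => ?_) (fun z => .of_forall fun τ => ?_) (integrable_inv_one_add_sq.mul_const M)
    (.of_forall fun τ => ?_)
  · exact ((hL.comp (Continuous.prodMk_left z.im)).mul
      (hg.comp (by fun_prop))).aestronglyMeasurable
  · rw [norm_mul, norm_of_nonneg (laplaceMoment_nonneg _ _)]
    gcongr
    · exact laplaceMoment_zero_one_add_sq_le (by positivity) τ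
    · exact hM _
  · exact (hL.comp (Continuous.prodMk continuous_const Complex.continuous_im)).mul
      (hg.comp (Complex.continuous_re.sub (Complex.continuous_im.mul continuous_const)))

theorem halfPlaneExtension_ofReal (x : ℝ) : halfPlaneExtension k g x = π * g x := by
  have h (τ : ℝ) : laplaceMoment 0 0 (1 + τ ^ 2) = (1 + τ ^ 2)⁻¹ :=
    laplaceMoment_zero_zero (by positivity)
  simp [halfPlaneExtension, h, integral_mul_const]

theorem halfPlaneExtension_nonneg (hg : ∀ x, 0 ≤ g x) (z : ℂ) : 0 ≤ halfPlaneExtension k g z :=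
  integral_nonneg fun _ => mul_nonneg (laplaceMoment_nonneg _ _) (hg _)

theorem halfPlaneExtension_le (hk : 0 ≤ k) (hg : ∀ x, 0 ≤ g x) {M : ℝ} (hM : ∀ x, g x ≤ M)
    (z : ℂ) : halfPlaneExtension k g z ≤ π * M := by
  rw [← integral_univ_inv_one_add_sq, ← integral_mul_const]
  refine integral_mono_of_nonneg
    (.of_forall fun _ => mul_nonneg (laplaceMoment_nonneg _ _) (hg _))
    (integrable_inv_one_add_sq.mul_const M) (.of_forall fun τ => ?_)
  dsimp only
  gcongr
  · exact hg _
  · exact laplaceMoment_zero_one_add_sq_le (by positivity) τ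
  · exact hM _

theorem halfPlaneExtension_eq {z : ℂ} (hz : 0 < z.im) :
    halfPlaneExtension k g z = z.im * convMoment k g 0 0 z := by
  have h1 := integral_sub_left_eq_self (fun t => g t *
    ((z.re - t) ^ 0 * laplaceMoment k 0 ((z.re - t) ^ 2 + z.im ^ 2))) volume z.re
  have h2 := Measure.integral_comp_mul_left (fun s => g (z.re - s) *
    ((z.re - (z.re - s)) ^ 0 * laplaceMoment k 0 ((z.re - (z.re - s)) ^ 2 + z.im ^ 2))) z.im
  rw [h1, abs_of_pos (inv_pos.2 hz), smul_eq_mul, eq_inv_mul_iff_mul_eq₀ hz.ne'] at h2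
  rw [convMoment, ← h2, halfPlaneExtension, ← mul_assoc, ← integral_const_mul]
  congr 1 with τ
  rw [laplaceMoment_zero_scale hz]
  ring_nf

theorem contDiffOn_halfPlaneExtension (hk : 0 ≤ k) (hg : Integrable g) :
    ContDiffOn ℝ (⊤ : ℕ∞) (halfPlaneExtension k g) {z : ℂ | 0 < z.im} :=
  (Complex.imCLM.contDiff.contDiffOn.mul
    (contDiffOn_convMoment hk hg (a := 0) (n := 0) (by omega))).congr
    fun _ hz => halfPlaneExtension_eq hz

theorem lap_halfPlaneExtension (hk : 0 ≤ k) (hg : Integrable g) {z : ℂ} (hz : 0 < z.im) :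
    lap (halfPlaneExtension k g) z = k * halfPlaneExtension k g z := by
  have hopen : IsOpen {z : ℂ | 0 < z.im} := isOpen_lt continuous_const Complex.continuous_im
  have h : halfPlaneExtension k g =ᶠ[𝓝 z] fun w => w.im * convMoment k g 0 0 w :=
    eventually_of_mem (hopen.mem_nhds hz) fun w hw => halfPlaneExtension_eq hw
  rw [halfPlaneExtension_eq hz, ← lap_im_mul_convMoment hk hg hz, lap, lap,
    (h.iteratedFDeriv ℝ 2).eq_of_nhds]

theorem laplaceMoment_antitoneOn (hk : 0 ≤ k) (n : ℕ) :
    AntitoneOn (laplaceMoment k n) (Ioi 0) := by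
  intro r hr ρ hρ h
  refine setIntegral_mono_on (integrableOn_laplaceMoment hk n hρ)
    (integrableOn_laplaceMoment hk n hr) measurableSet_Ioi fun u (hu : 0 < u) => ?_
  gcongr

theorem halfPlaneExtension_le_exp (hk : 0 < k) (hg : Integrable g) {z : ℂ} (hz : 1 ≤ z.im) :
    halfPlaneExtension k g z ≤
      (√(2 * √k * π) + 4) * (∫ t, |g t|) * exp (-2 * √k * z.im) / √z.im := by
  have hz0 : 0 < z.im := by linarith
  have h1 : convMoment k g 0 0 z ≤ (∫ t, |g t|) * laplaceMoment k 0 (z.im ^ 2) := by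
    rw [← integral_mul_const]
    refine integral_mono (integrable_convMoment hk.le hg (by omega) hz0)
      (hg.abs.mul_const _) fun t => ?_
    have : laplaceMoment k 0 ((z.re - t) ^ 2 + z.im ^ 2) ≤ laplaceMoment k 0 (z.im ^ 2) :=
      laplaceMoment_antitoneOn hk.le 0 (show 0 < z.im ^ 2 by positivity)
        (show 0 < (z.re - t) ^ 2 + z.im ^ 2 by positivity) (by linarith [sq_nonneg (z.re - t)])
    dsimp only
    rw [pow_zero, one_mul]
    gcongr
    · exact laplaceMoment_nonneg _ _
    · exact le_abs_self _
  rw [halfPlaneExtension_eq hz0]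
  calc z.im * convMoment k g 0 0 z
      ≤ z.im * ((∫ t, |g t|) *
          ((√(2 * √k * π) + 4) * exp (-2 * √k * z.im) / (z.im * √z.im))) := by
        refine mul_le_mul_of_nonneg_left (h1.trans ?_) hz0.le
        exact mul_le_mul_of_nonneg_left (laplaceMoment_zero_sq_le hk hz)
          (integral_nonneg fun t => abs_nonneg _)
    _ = _ := by field_simp

end HalfPlaneExtension

/-- **Half-plane Bessel-type barrier.** For every `k > 0` there is `C > 0` (depending
only on `k`) such that for every continuous, bounded, nonnegative, integrable
`g : ℝ → ℝ` there is `h`, smooth on the open upper half-plane and continuous on its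
closure, with `Δh = k h`, boundary value `g`, `0 ≤ h ≤ sup g`, and
`h(x+iy) ≤ C ‖g‖₁ e^{−2√k y}/√y` for `y ≥ 1`. -/
theorem stmt_6 (k : ℝ) (hk : 0 < k) :
    ∃ C : ℝ, 0 < C ∧
      ∀ g : ℝ → ℝ, Continuous g → (∃ M : ℝ, ∀ x : ℝ, g x ≤ M) →
        (∀ x : ℝ, 0 ≤ g x) → MeasureTheory.Integrable g →
        ∃ h : ℂ → ℝ,
          ContDiffOn ℝ (⊤ : ℕ∞) h {z : ℂ | 0 < z.im} ∧
          ContinuousOn h {z : ℂ | 0 ≤ z.im} ∧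
          (∀ z : ℂ, 0 < z.im → lap h z = k * h z) ∧
          (∀ x : ℝ, h (x : ℂ) = g x) ∧
          (∀ z : ℂ, 0 ≤ z.im → 0 ≤ h z ∧ h z ≤ ⨆ x : ℝ, g x) ∧
          (∀ x y : ℝ, 1 ≤ y →
            h ((x : ℂ) + (y : ℂ) * Complex.I) ≤
              C * (∫ t : ℝ, |g t|) * Real.exp (-2 * Real.sqrt k * y) / Real.sqrt y) := by
  refine ⟨√(2 * √k * π) + 4, by positivity, fun g hgc ⟨M, hM⟩ hg0 hgi => ?_⟩
  have hbdd : BddAbove (range g) := ⟨M, forall_mem_range.2 hM⟩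
  have hsup : ∀ x, g x ≤ ⨆ x, g x := le_ciSup hbdd
  have hπg : ∀ x, 0 ≤ π⁻¹ * g x := fun x => mul_nonneg (by positivity) (hg0 x)
  have hπi : Integrable fun x => π⁻¹ * g x := hgi.const_mul _
  refine ⟨halfPlaneExtension k fun x => π⁻¹ * g x, contDiffOn_halfPlaneExtension hk.le hπi,
    (continuous_halfPlaneExtension hk.le (by fun_prop) (M := π⁻¹ * M) fun x => ?_).continuousOn,
    fun z hz => lap_halfPlaneExtension hk.le hπi hz, fun x => ?_,
    fun z _ => ⟨halfPlaneExtension_nonneg hπg z, ?_⟩, fun x y hy => ?_⟩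
  · rw [abs_of_nonneg (hπg x)]
    gcongr
    exact hM x
  · rw [halfPlaneExtension_ofReal, mul_inv_cancel_left₀ pi_ne_zero]
  · refine (halfPlaneExtension_le hk.le hπg (M := π⁻¹ * ⨆ x, g x) (fun x => ?_) z).trans_eq
      (mul_inv_cancel_left₀ pi_ne_zero _)
    gcongr
    exact hsup x
  · have h := halfPlaneExtension_le_exp hk hπi (z := x + y * Complex.I) (by simpa using hy)
    simp only [abs_mul, integral_const_mul, abs_inv, abs_of_pos pi_pos] at h
    simp only [Complex.add_im, Complex.ofReal_im, Complex.mul_im, Complex.ofReal_re, Complex.I_im,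
      mul_one, Complex.I_re, mul_zero, add_zero, zero_add] at h
    refine h.trans ?_
    have hI : 0 ≤ ∫ t, |g t| := integral_nonneg fun t => abs_nonneg _
    gcongr
    exact mul_le_of_le_one_left hI (inv_le_one_of_one_le₀ (by linarith [pi_gt_three]))
end

section
/- Let k, k' > 0 and let g : ℝ → ℝ be a continuous, nonnegative, integrable function with g ≤ 1/(4k') everywhere. Then there exists a function v, smooth on the open upper half-plane ℍ and continuous on its closure, such that: v ≥ 0 everywhere; v ≥ g on ℝ; Δv ≤ k·v − k·k'·v² on ℍ; and there is a constant C > 0 such that v(x + iy) ≤ C · ‖g‖_{L¹(ℝ)} · e^{−2√k · y} / √y for all x ∈ ℝ and y ≥ 1. -/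
open MeasureTheory Filter Topology

/-- `f` is differentiable on the upper half-plane, with partial derivatives `f₁` and `f₂`. -/
def HasPartials (f f₁ f₂ : ℂ → ℝ) : Prop :=
  ∀ z : ℂ, 0 < z.im → HasFDerivAt f (f₁ z • Complex.reCLM + f₂ z • Complex.imCLM) z

theorem isOpen_upperHalfPlane : IsOpen {z : ℂ | 0 < z.im} :=
  isOpen_lt continuous_const Complex.continuous_im

namespace HasPartials

variable {f f₁ f₂ h h₁ h₂ : ℂ → ℝ}

theorem congr (hf : HasPartials f f₁ f₂) (hfh : ∀ z : ℂ, 0 < z.im → h z = f z)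
    (h1 : ∀ z : ℂ, 0 < z.im → h₁ z = f₁ z) (h2 : ∀ z : ℂ, 0 < z.im → h₂ z = f₂ z) :
    HasPartials h h₁ h₂ := by
  intro z hz
  rw [h1 z hz, h2 z hz]
  exact (hf z hz).congr_of_eventuallyEq
    (Filter.eventually_of_mem (isOpen_upperHalfPlane.mem_nhds hz) hfh)

theorem add (hf : HasPartials f f₁ f₂) (hh : HasPartials h h₁ h₂) :
    HasPartials (f + h) (f₁ + h₁) (f₂ + h₂) := by
  intro z hz
  refine ((hf z hz).add (hh z hz)).congr_fderiv ?_
  ext v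
  simp
  ring

theorem mul (hf : HasPartials f f₁ f₂) (hh : HasPartials h h₁ h₂) :
    HasPartials (f * h) (f₁ * h + f * h₁) (f₂ * h + f * h₂) := by
  intro z hz
  refine ((hf z hz).mul (hh z hz)).congr_fderiv ?_
  ext v
  simp
  ring

theorem smul (c : ℝ) (hf : HasPartials f f₁ f₂) : HasPartials (c • f) (c • f₁) (c • f₂) := by
  intro z hz
  refine ((hf z hz).const_smul c).congr_fderiv ?_
  ext v
  simp
  ring

theorem algebraMap (c : ℝ) : HasPartials (algebraMap ℝ (ℂ → ℝ) c) 0 0 := by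
  intro z _
  refine (hasFDerivAt_const c z).congr_fderiv ?_
  ext v
  simp

theorem neg (hf : HasPartials f f₁ f₂) : HasPartials (-f) (-f₁) (-f₂) := by
  simpa using hf.smul (-1)

theorem sub_one (hf : HasPartials f f₁ f₂) : HasPartials (f - 1) f₁ f₂ := by
  have h := hf.add (algebraMap (-1))
  rw [map_neg, map_one, ← sub_eq_add_neg] at h
  simpa using h

theorem comp {φ φ' : ℝ → ℝ} (hf : HasPartials f f₁ f₂)
    (hφ : ∀ z : ℂ, 0 < z.im → HasDerivAt φ (φ' (f z)) (f z)) :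
    HasPartials (fun z => φ (f z)) (fun z => φ' (f z) * f₁ z) (fun z => φ' (f z) * f₂ z) := by
  intro z hz
  refine ((hφ z hz).comp_hasFDerivAt z (hf z hz)).congr_fderiv ?_
  ext v
  simp
  ring

theorem continuousOn (hf : HasPartials f f₁ f₂) : ContinuousOn f {z : ℂ | 0 < z.im} :=
  fun z hz => (hf z hz).continuousAt.continuousWithinAt

theorem lap_eq {f₁₁ f₁₂ f₂₁ f₂₂ : ℂ → ℝ} (hf : HasPartials f f₁ f₂)
    (hf₁ : HasPartials f₁ f₁₁ f₁₂) (hf₂ : HasPartials f₂ f₂₁ f₂₂) {z : ℂ} (hz : 0 < z.im) :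
    lap f z = 1 / 4 * (f₁₁ z + f₂₂ z) := by
  have hd : fderiv ℝ f =ᶠ[𝓝 z] fun w => f₁ w • Complex.reCLM + f₂ w • Complex.imCLM :=
    Filter.eventually_of_mem (isOpen_upperHalfPlane.mem_nhds hz) fun w hw => (hf w hw).fderiv
  have h2 := (((hf₁ z hz).smul_const Complex.reCLM).add
    ((hf₂ z hz).smul_const Complex.imCLM)).fderiv
  have h3 := hd.fderiv_eq.trans h2
  rw [lap, iteratedFDeriv_two_apply, iteratedFDeriv_two_apply, h3]
  simp

end HasPartials

theorem hasPartials_id_re : HasPartials Complex.re 1 0 := by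
  intro z _
  refine Complex.reCLM.hasFDerivAt.congr_fderiv ?_
  ext v
  simp

theorem hasPartials_id_im : HasPartials Complex.im 0 1 := by
  intro z _
  refine Complex.imCLM.hasFDerivAt.congr_fderiv ?_
  ext v
  simp

/-- `f` is continuous on the upper half-plane, and bounded away from the real line. -/
def IsTame (f : ℂ → ℝ) : Prop :=
  ContinuousOn f {z : ℂ | 0 < z.im} ∧ ∀ δ > 0, ∃ C, ∀ z : ℂ, δ ≤ z.im → |f z| ≤ C

namespace IsTame

variable {f h : ℂ → ℝ}

theorem add (hf : IsTame f) (hh : IsTame h) : IsTame (f + h) := by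
  refine ⟨hf.1.add hh.1, fun δ hδ => ?_⟩
  obtain ⟨C, hC⟩ := hf.2 δ hδ
  obtain ⟨D, hD⟩ := hh.2 δ hδ
  exact ⟨C + D, fun z hz => (abs_add_le _ _).trans (add_le_add (hC z hz) (hD z hz))⟩

theorem mul (hf : IsTame f) (hh : IsTame h) : IsTame (f * h) := by
  refine ⟨hf.1.mul hh.1, fun δ hδ => ?_⟩
  obtain ⟨C, hC⟩ := hf.2 δ hδ
  obtain ⟨D, hD⟩ := hh.2 δ hδ
  refine ⟨C * D, fun z hz => ?_⟩
  rw [Pi.mul_apply, abs_mul]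
  exact mul_le_mul (hC z hz) (hD z hz) (abs_nonneg _) ((abs_nonneg _).trans (hC z hz))

theorem algebraMap (c : ℝ) : IsTame (algebraMap ℝ (ℂ → ℝ) c) :=
  ⟨continuousOn_const, fun _ _ => ⟨|c|, fun _ _ => le_rfl⟩⟩

theorem continuous_translate (hf : IsTame f) {z : ℂ} (hz : 0 < z.im) :
    Continuous fun t : ℝ => f (z - t) := by
  refine hf.1.comp_continuous (by fun_prop) fun t => ?_
  simpa using hz

theorem integrable {g : ℝ → ℝ} (hg : Integrable g) (hf : IsTame f) {z : ℂ} (hz : 0 < z.im) :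
    Integrable fun t : ℝ => g t * f (z - t) := by
  obtain ⟨C, hC⟩ := hf.2 z.im hz
  refine hg.mul_bdd (c := C) (hf.continuous_translate hz).aestronglyMeasurable ?_
  exact Eventually.of_forall fun t => hC _ (by simp)

end IsTame

/-- Convolution over horizontal translates. -/
noncomputable def conv (g : ℝ → ℝ) (f : ℂ → ℝ) (z : ℂ) : ℝ :=
  ∫ t : ℝ, g t * f (z - t)

theorem HasPartials.conv {g : ℝ → ℝ} (hg : Integrable g) {f f₁ f₂ : ℂ → ℝ}
    (hp : HasPartials f f₁ f₂) (hf : IsTame f) (hf₁ : IsTame f₁) (hf₂ : IsTame f₂) :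
    HasPartials (conv g f) (conv g f₁) (conv g f₂) := by
  intro z hz
  have hδ : 0 < z.im / 2 := half_pos hz
  obtain ⟨C, hC⟩ := hf₁.2 _ hδ
  obtain ⟨D, hD⟩ := hf₂.2 _ hδ
  have hs : {w : ℂ | z.im / 2 < w.im} ∈ 𝓝 z :=
    (isOpen_lt continuous_const Complex.continuous_im).mem_nhds (half_lt_self hz)
  have i₁ := hf₁.integrable hg hz
  have i₂ := hf₂.integrable hg hz
  have key := hasFDerivAt_integral_of_dominated_of_fderiv_le (μ := volume) (𝕜 := ℝ) (x₀ := z)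
    (F := fun w (t : ℝ) => g t * f (w - t))
    (F' := fun w (t : ℝ) => (g t * f₁ (w - t)) • Complex.reCLM + (g t * f₂ (w - t)) • Complex.imCLM)
    (bound := fun t => |g t| * (C + D)) hs
    (by
      filter_upwards [hs] with w hw
      exact (hf.integrable hg (hδ.trans hw)).aestronglyMeasurable)
    (hf.integrable hg hz)
    ((i₁.smul_const Complex.reCLM).add (i₂.smul_const Complex.imCLM)).aestronglyMeasurable
    (by
      refine Eventually.of_forall fun t w hw => ?_
      have hw' : z.im / 2 ≤ (w - t).im := by simpa using le_of_lt hw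
      refine (norm_add_le _ _).trans ?_
      rw [norm_smul, norm_smul, Complex.reCLM_norm, Complex.imCLM_norm, norm_mul, norm_mul,
        mul_one, mul_one, ← mul_add]
      exact mul_le_mul_of_nonneg_left (add_le_add (hC _ hw') (hD _ hw')) (abs_nonneg _))
    (hg.abs.mul_const _)
    (by
      refine Eventually.of_forall fun t w hw => ?_
      have hw' : 0 < (w - t).im := by simpa using hδ.trans hw
      refine (((hp _ hw').comp w ((hasFDerivAt_id w).sub_const (t : ℂ))).const_mul
        (g t)).congr_fderiv ?_
      ext v
      simp
      ring)
  refine key.congr_fderiv ?_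
  rw [integral_add (i₁.smul_const _) (i₂.smul_const _), integral_smul_const, integral_smul_const]
  rfl

theorem contDiffOn_conv {g : ℝ → ℝ} (hg : Integrable g) {S : Set (ℂ → ℝ)}
    (hS : ∀ f ∈ S, IsTame f) (hp : ∀ f ∈ S, ∃ f₁ ∈ S, ∃ f₂ ∈ S, HasPartials f f₁ f₂)
    {f : ℂ → ℝ} (hf : f ∈ S) :
    ContDiffOn ℝ (⊤ : ℕ∞) (conv g f) {z : ℂ | 0 < z.im} := by
  rw [contDiffOn_infty]
  intro n
  induction n generalizing f with
  | zero =>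
    obtain ⟨f₁, h₁, f₂, h₂, h⟩ := hp f hf
    exact contDiffOn_zero.2 (h.conv hg (hS _ hf) (hS _ h₁) (hS _ h₂)).continuousOn
  | succ n ih =>
    obtain ⟨f₁, h₁, f₂, h₂, h⟩ := hp f hf
    have hc := h.conv hg (hS _ hf) (hS _ h₁) (hS _ h₂)
    push_cast
    rw [contDiffOn_succ_iff_fderiv_of_isOpen isOpen_upperHalfPlane]
    refine ⟨fun z hz => (hc z hz).differentiableAt.differentiableWithinAt, by simp, ?_⟩
    exact (((ih h₁).smul contDiffOn_const).add ((ih h₂).smul contDiffOn_const)).congr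
      fun z hz => (hc z hz).fderiv

namespace BarrierKernel

/-- The cosine of the argument. -/
noncomputable def cosArg (z : ℂ) : ℝ := z.re / ‖z‖

/-- The sine of the argument. -/
noncomputable def sinArg (z : ℂ) : ℝ := z.im / ‖z‖

/-- The inverse of the modulus. -/
noncomputable def invNorm (z : ℂ) : ℝ := ‖z‖⁻¹

/-- The function `(1 + 2mr)^(-1/2)`. -/
noncomputable def invRoot (m : ℝ) (z : ℂ) : ℝ := (√(1 + 2 * m * ‖z‖))⁻¹

/-- The profile `e^(-mr) (1 + 2mr)^(1/2)`. -/
noncomputable def profile (m r : ℝ) : ℝ := Real.exp (-(m * r)) * √(1 + 2 * m * r)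

/-- The profile as a function of `z`, where `r = |z|`. -/
noncomputable def radial (m : ℝ) (z : ℂ) : ℝ := profile m ‖z‖

/-- The elementary supersolution kernel `y e^(-mr) (1 + 2mr)^(1/2) / r²`. -/
noncomputable def kernel (m : ℝ) : ℂ → ℝ := sinArg * invNorm * radial m

theorem norm_pos_of_im_pos {z : ℂ} (hz : 0 < z.im) : 0 < ‖z‖ :=
  hz.trans_le ((le_abs_self _).trans (Complex.abs_im_le_norm z))

theorem hasPartials_norm : HasPartials (fun z => ‖z‖) cosArg sinArg := by
  have h := (hasPartials_id_re.mul hasPartials_id_re).add (hasPartials_id_im.mul hasPartials_id_im)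
  have h' := h.comp (φ := Real.sqrt) (φ' := fun x => 1 / (2 * √x)) fun z hz =>
    Real.hasDerivAt_sqrt (by
      simp only [Pi.add_apply, Pi.mul_apply]
      nlinarith [mul_self_nonneg z.re, mul_pos hz hz])
  have hn : ∀ z : ℂ, ‖z‖ = √((Complex.re * Complex.re + Complex.im * Complex.im) z) := fun z => by
    rw [Complex.norm_eq_sqrt_sq_add_sq]
    simp [sq]
  refine h'.congr (fun z _ => hn z) (fun z hz => ?_) fun z hz => ?_
  all_goals
    have := norm_pos_of_im_pos hz
    rw [← hn]
    simp only [cosArg, sinArg, Pi.add_apply, Pi.mul_apply, Pi.one_apply, Pi.zero_apply]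
    field_simp
    ring

theorem cosArg_sq_add_sinArg_sq {z : ℂ} (hz : 0 < z.im) :
    cosArg z ^ 2 + sinArg z ^ 2 = 1 := by
  have := norm_pos_of_im_pos hz
  have h := Complex.sq_norm z
  rw [Complex.normSq_apply] at h
  simp only [cosArg, sinArg]
  field_simp
  rw [h]
  ring

theorem hasPartials_invNorm :
    HasPartials invNorm (-(cosArg * invNorm * invNorm))
      (-(sinArg * invNorm * invNorm)) := by
  refine (hasPartials_norm.comp (φ := fun x => x⁻¹) (φ' := fun x => -(x ^ 2)⁻¹) fun z hz =>
    hasDerivAt_inv (norm_pos_of_im_pos hz).ne').congr (fun _ _ => rfl) (fun z hz => ?_)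
    fun z hz => ?_
  all_goals
    have := norm_pos_of_im_pos hz
    simp only [invNorm, Pi.neg_apply, Pi.mul_apply]
    field_simp

theorem hasPartials_cosArg :
    HasPartials cosArg (sinArg * sinArg * invNorm)
      (-(cosArg * sinArg * invNorm)) := by
  refine (hasPartials_id_re.mul hasPartials_invNorm).congr (fun _ _ => rfl) (fun z hz => ?_)
    fun z hz => ?_
  · have h := cosArg_sq_add_sinArg_sq hz
    have hr : z.re * invNorm z = cosArg z := rfl
    simp only [Pi.add_apply, Pi.neg_apply, Pi.mul_apply, Pi.one_apply]
    linear_combination invNorm z * h + invNorm z * cosArg z * hr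
  · have hr : z.re * invNorm z = cosArg z := rfl
    simp only [Pi.add_apply, Pi.neg_apply, Pi.mul_apply, Pi.zero_apply]
    linear_combination sinArg z * invNorm z * hr

theorem hasPartials_sinArg :
    HasPartials sinArg (-(cosArg * sinArg * invNorm))
      (cosArg * cosArg * invNorm) := by
  refine (hasPartials_id_im.mul hasPartials_invNorm).congr (fun _ _ => rfl) (fun z hz => ?_)
    fun z hz => ?_
  · have hr : z.im * invNorm z = sinArg z := rfl
    simp only [Pi.add_apply, Pi.neg_apply, Pi.mul_apply, Pi.zero_apply]
    linear_combination cosArg z * invNorm z * hr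
  · have h := cosArg_sq_add_sinArg_sq hz
    have hr : z.im * invNorm z = sinArg z := rfl
    simp only [Pi.add_apply, Pi.neg_apply, Pi.mul_apply, Pi.one_apply]
    linear_combination invNorm z * h + invNorm z * sinArg z * hr

variable {m : ℝ}

theorem hasDerivAt_sqrt_affine (hm : 0 < m) {r : ℝ} (hr : 0 < r) :
    HasDerivAt (fun r => √(1 + 2 * m * r)) (m * (√(1 + 2 * m * r))⁻¹) r := by
  have hpos : 0 < 1 + 2 * m * r := by positivity
  refine ((((hasDerivAt_id r).const_mul (2 * m)).const_add 1).sqrt hpos.ne').congr_deriv ?_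
  simp only [id]
  field_simp

theorem hasPartials_invRoot (hm : 0 < m) :
    HasPartials (invRoot m) (-m • (cosArg * invRoot m * invRoot m * invRoot m))
      (-m • (sinArg * invRoot m * invRoot m * invRoot m)) := by
  refine (hasPartials_norm.comp (φ := fun r => (√(1 + 2 * m * r))⁻¹)
    (φ' := fun r => -(m * (√(1 + 2 * m * r))⁻¹) / √(1 + 2 * m * r) ^ 2) fun z hz => ?_).congr
    (fun _ _ => rfl) (fun z hz => ?_) fun z hz => ?_
  · have := norm_pos_of_im_pos hz
    exact (hasDerivAt_sqrt_affine hm this).fun_inv (by positivity)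
  all_goals
    have := norm_pos_of_im_pos hz
    simp only [invRoot, Pi.smul_apply, Pi.mul_apply, smul_eq_mul]
    field_simp

theorem hasPartials_radial (hm : 0 < m) :
    HasPartials (radial m) (m • (cosArg * (invRoot m * invRoot m - 1) * radial m))
      (m • (sinArg * (invRoot m * invRoot m - 1) * radial m)) := by
  refine (hasPartials_norm.comp (φ := profile m)
    (φ' := fun r => Real.exp (-(m * r)) * (-m) * √(1 + 2 * m * r) +
      Real.exp (-(m * r)) * (m * (√(1 + 2 * m * r))⁻¹)) fun z hz => ?_).congr
    (fun _ _ => rfl) (fun z hz => ?_) fun z hz => ?_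
  · have h := norm_pos_of_im_pos hz
    have he : HasDerivAt (fun r => Real.exp (-(m * r))) (Real.exp (-(m * ‖z‖)) * (-m)) ‖z‖ := by
      simpa using ((hasDerivAt_id ‖z‖).const_mul m).neg.exp
    exact he.mul (hasDerivAt_sqrt_affine hm h)
  all_goals
    have := norm_pos_of_im_pos hz
    simp only [invRoot, radial, profile, Pi.smul_apply, Pi.mul_apply, Pi.sub_apply, Pi.one_apply,
      smul_eq_mul]
    field_simp
    ring

theorem profile_nonneg (m r : ℝ) : 0 ≤ profile m r :=
  mul_nonneg (Real.exp_pos _).le (Real.sqrt_nonneg _)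

theorem profile_le_one (m r : ℝ) : profile m r ≤ 1 := by
  have h : √(1 + 2 * m * r) ≤ Real.exp (m * r) := by
    rw [Real.sqrt_le_left (Real.exp_pos _).le, ← Real.exp_nat_mul]
    have := Real.add_one_le_exp (2 * m * r)
    convert this using 1
    · ring
    · push_cast
      ring_nf
  calc profile m r ≤ Real.exp (-(m * r)) * Real.exp (m * r) :=
        mul_le_mul_of_nonneg_left h (Real.exp_pos _).le
    _ = 1 := by rw [← Real.exp_add]; simp

theorem continuous_profile (m : ℝ) : Continuous (profile m) := by
  unfold profile
  fun_prop

/-- An algebra of functions containing the kernel and stable under partial derivatives. -/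
noncomputable def kernelAlgebra (m : ℝ) : Subalgebra ℝ (ℂ → ℝ) :=
  Algebra.adjoin ℝ {cosArg, sinArg, invNorm, invRoot m, radial m}

theorem cosArg_mem : cosArg ∈ kernelAlgebra m := Algebra.subset_adjoin (by simp)

theorem sinArg_mem : sinArg ∈ kernelAlgebra m := Algebra.subset_adjoin (by simp)

theorem invNorm_mem : invNorm ∈ kernelAlgebra m := Algebra.subset_adjoin (by simp)

theorem invRoot_mem : invRoot m ∈ kernelAlgebra m := Algebra.subset_adjoin (by simp)

theorem radial_mem : radial m ∈ kernelAlgebra m := Algebra.subset_adjoin (by simp)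

theorem kernel_mem : kernel m ∈ kernelAlgebra m :=
  mul_mem (mul_mem sinArg_mem invNorm_mem) radial_mem

theorem isTame_of_mem (hm : 0 < m) {f : ℂ → ℝ} (hf : f ∈ kernelAlgebra m) : IsTame f := by
  induction hf using Algebra.adjoin_induction with
  | mem f hf =>
    rcases hf with rfl | rfl | rfl | rfl | rfl
    · exact ⟨hasPartials_cosArg.continuousOn, fun δ hδ => ⟨1, fun z hz => by
        rw [cosArg, abs_div, abs_norm]
        exact div_le_one_of_le₀ (Complex.abs_re_le_norm z) (norm_nonneg z)⟩⟩
    · exact ⟨hasPartials_sinArg.continuousOn, fun δ hδ => ⟨1, fun z hz => by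
        rw [sinArg, abs_div, abs_norm]
        exact div_le_one_of_le₀ (Complex.abs_im_le_norm z) (norm_nonneg z)⟩⟩
    · exact ⟨hasPartials_invNorm.continuousOn, fun δ hδ => ⟨δ⁻¹, fun z hz => by
        rw [invNorm, abs_inv, abs_norm]
        exact inv_anti₀ hδ (hz.trans ((le_abs_self _).trans (Complex.abs_im_le_norm z)))⟩⟩
    · exact ⟨(hasPartials_invRoot hm).continuousOn, fun δ hδ => ⟨1, fun z hz => by
        rw [invRoot, abs_inv, abs_of_nonneg (Real.sqrt_nonneg _)]
        refine inv_le_one_of_one_le₀ (Real.one_le_sqrt.2 ?_)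
        have : 0 ≤ 2 * m * ‖z‖ := by positivity
        linarith⟩⟩
    · exact ⟨(hasPartials_radial hm).continuousOn, fun δ hδ => ⟨1, fun z hz => by
        rw [radial, abs_of_nonneg (profile_nonneg _ _)]
        exact profile_le_one _ _⟩⟩
  | algebraMap c => exact IsTame.algebraMap c
  | add _ _ _ _ hf hh => exact hf.add hh
  | mul _ _ _ _ hf hh => exact hf.mul hh

theorem exists_hasPartials_of_mem (hm : 0 < m) {f : ℂ → ℝ} (hf : f ∈ kernelAlgebra m) :
    ∃ f₁ ∈ kernelAlgebra m, ∃ f₂ ∈ kernelAlgebra m, HasPartials f f₁ f₂ := by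
  have ha := cosArg_mem (m := m)
  have hb := sinArg_mem (m := m)
  have hw := invNorm_mem (m := m)
  have hp := invRoot_mem (m := m)
  have hr := radial_mem (m := m)
  induction hf using Algebra.adjoin_induction with
  | mem f hf =>
    rcases hf with rfl | rfl | rfl | rfl | rfl
    · refine ⟨_, ?_, _, ?_, hasPartials_cosArg⟩ <;>
        apply_rules [Subalgebra.smul_mem, neg_mem, sub_mem, mul_mem, one_mem]
    · refine ⟨_, ?_, _, ?_, hasPartials_sinArg⟩ <;>
        apply_rules [Subalgebra.smul_mem, neg_mem, sub_mem, mul_mem, one_mem]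
    · refine ⟨_, ?_, _, ?_, hasPartials_invNorm⟩ <;>
        apply_rules [Subalgebra.smul_mem, neg_mem, sub_mem, mul_mem, one_mem]
    · refine ⟨_, ?_, _, ?_, hasPartials_invRoot hm⟩ <;>
        apply_rules [Subalgebra.smul_mem, neg_mem, sub_mem, mul_mem, one_mem]
    · refine ⟨_, ?_, _, ?_, hasPartials_radial hm⟩ <;>
        apply_rules [Subalgebra.smul_mem, neg_mem, sub_mem, mul_mem, one_mem]
  | algebraMap c => exact ⟨0, zero_mem _, 0, zero_mem _, HasPartials.algebraMap c⟩
  | add f h _ _ hf hh =>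
    obtain ⟨f₁, h1, f₂, h2, hf⟩ := hf
    obtain ⟨h₁, h3, h₂, h4, hh⟩ := hh
    exact ⟨_, add_mem h1 h3, _, add_mem h2 h4, hf.add hh⟩
  | mul f h hfm hhm hf hh =>
    obtain ⟨f₁, h1, f₂, h2, hf⟩ := hf
    obtain ⟨h₁, h3, h₂, h4, hh⟩ := hh
    exact ⟨_, add_mem (mul_mem h1 hhm) (mul_mem hfm h3), _,
      add_mem (mul_mem h2 hhm) (mul_mem hfm h4), hf.mul hh⟩

theorem kernel_nonneg {z : ℂ} (hz : 0 < z.im) : 0 ≤ kernel m z :=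
  mul_nonneg (mul_nonneg (div_nonneg hz.le (norm_nonneg z)) (inv_nonneg.2 (norm_nonneg z)))
    (profile_nonneg _ _)

theorem exists_hasPartials_kernel (hm : 0 < m) :
    ∃ f₁ ∈ kernelAlgebra m, ∃ f₂ ∈ kernelAlgebra m, ∃ f₁₁ ∈ kernelAlgebra m,
      ∃ f₁₂ ∈ kernelAlgebra m, ∃ f₂₁ ∈ kernelAlgebra m, ∃ f₂₂ ∈ kernelAlgebra m,
        HasPartials (kernel m) f₁ f₂ ∧ HasPartials f₁ f₁₁ f₁₂ ∧ HasPartials f₂ f₂₁ f₂₂ ∧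
          ∀ z : ℂ, 0 < z.im → f₁₁ z + f₂₂ z ≤ m ^ 2 * kernel m z := by
  have ma := cosArg_mem (m := m)
  have mb := sinArg_mem (m := m)
  have mw := invNorm_mem (m := m)
  have mp := invRoot_mem (m := m)
  have mr := radial_mem (m := m)
  have da := hasPartials_cosArg
  have db := hasPartials_sinArg
  have dw := hasPartials_invNorm
  have dp := hasPartials_invRoot hm
  have dr := hasPartials_radial hm
  have dbw := db.mul dw
  have dq := (dp.mul dp).sub_one
  have d₁ := (((((da.mul db).mul dw).neg.mul dw).add (db.mul ((da.mul dw).mul dw).neg)).mul dr).add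
    (dbw.mul (((da.mul dq).mul dr).smul m))
  have d₂ := (((((da.mul da).mul dw).mul dw).add (db.mul ((db.mul dw).mul dw).neg)).mul dr).add
    (dbw.mul (((db.mul dq).mul dr).smul m))
  refine ⟨_, ?_, _, ?_, _, ?_, _, ?_, _, ?_, _, ?_, dbw.mul dr, d₁, d₂, fun z hz => ?_⟩
  iterate 6
    focus
      repeat' first
        | assumption | apply one_mem | apply Subalgebra.smul_mem | apply neg_mem | apply sub_mem
        | apply add_mem | apply mul_mem
  have hK := kernel_nonneg (m := m) hz
  have ht := cosArg_sq_add_sinArg_sq hz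
  have hq : invNorm z = invRoot m z ^ 2 * (invNorm z + 2 * m) := by
    have h := norm_pos_of_im_pos hz
    have hs : √(1 + 2 * m * ‖z‖) ^ 2 = 1 + 2 * m * ‖z‖ := Real.sq_sqrt (by positivity)
    rw [invNorm, invRoot, inv_pow, hs]
    field_simp
  have hle : 0 ≤ m ^ 2 * invRoot m z ^ 4 * kernel m z := by positivity
  simp only [kernel, Pi.add_apply, Pi.sub_apply, Pi.mul_apply, Pi.neg_apply, Pi.smul_apply,
    Pi.one_apply, smul_eq_mul] at hle ⊢
  generalize cosArg z = a at *
  generalize sinArg z = b at *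
  generalize invNorm z = w at *
  generalize invRoot m z = p at *
  generalize radial m z = E at *
  refine le_of_eq_of_le ?_ (sub_le_self _ hle)
  clear hle hK
  grind

theorem kernel_le {z : ℂ} (hm : 0 < m) (hz : 1 ≤ z.im) :
    kernel m z ≤ √(1 + 2 * m) * (Real.exp (-m * z.im) / √z.im) := by
  have hy : 0 < z.im := by linarith
  have hr := norm_pos_of_im_pos hy
  have hyr : z.im ≤ ‖z‖ := (le_abs_self _).trans (Complex.abs_im_le_norm z)
  have h1 : Real.exp (-(m * ‖z‖)) ≤ Real.exp (-m * z.im) := by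
    rw [Real.exp_le_exp]
    nlinarith
  have h2 : √(1 + 2 * m * ‖z‖) ≤ √(1 + 2 * m) * √‖z‖ := by
    rw [← Real.sqrt_mul (by positivity)]
    exact Real.sqrt_le_sqrt (by nlinarith)
  have h3 : √z.im ≤ √‖z‖ := Real.sqrt_le_sqrt hyr
  have hsy : 0 < √z.im := Real.sqrt_pos.2 hy
  have hsr : 0 < √‖z‖ := Real.sqrt_pos.2 hr
  have h4 : z.im * ‖z‖⁻¹ * ‖z‖⁻¹ * √‖z‖ ≤ 1 / √z.im := by
    have e : ‖z‖ = √‖z‖ * √‖z‖ := (Real.mul_self_sqrt hr.le).symm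
    calc z.im * ‖z‖⁻¹ * ‖z‖⁻¹ * √‖z‖ ≤ ‖z‖ * ‖z‖⁻¹ * ‖z‖⁻¹ * √‖z‖ := by gcongr
      _ = 1 / √‖z‖ := by
        rw [mul_inv_cancel₀ hr.ne']
        nth_rewrite 1 [e]
        field_simp
      _ ≤ 1 / √z.im := by gcongr
  calc kernel m z
      = z.im * ‖z‖⁻¹ * ‖z‖⁻¹ * (Real.exp (-(m * ‖z‖)) * √(1 + 2 * m * ‖z‖)) := rfl
    _ ≤ z.im * ‖z‖⁻¹ * ‖z‖⁻¹ * (Real.exp (-m * z.im) * (√(1 + 2 * m) * √‖z‖)) := by gcongr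
    _ = √(1 + 2 * m) * Real.exp (-m * z.im) * (z.im * ‖z‖⁻¹ * ‖z‖⁻¹ * √‖z‖) := by ring
    _ ≤ √(1 + 2 * m) * Real.exp (-m * z.im) * (1 / √z.im) := by gcongr
    _ = _ := by ring

/-- The convolution of `g` with the kernel divided by `π`, in coordinates in which it extends
continuously to the real line. -/
noncomputable def extension (m : ℝ) (g : ℝ → ℝ) (z : ℂ) : ℝ :=
  Real.pi⁻¹ * ∫ s : ℝ, (1 + s ^ 2)⁻¹ * profile m (z.im * √(1 + s ^ 2)) * g (z.re + z.im * s)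

theorem extension_eq_conv (g : ℝ → ℝ) {z : ℂ} (hz : 0 < z.im) :
    extension m g z = Real.pi⁻¹ * conv g (kernel m) z := by
  have h1 : conv g (kernel m) z =
      ∫ t : ℝ, g (z.re + t) * kernel m (z - (z.re + t : ℝ)) :=
    (integral_add_left_eq_self (fun t : ℝ => g t * kernel m (z - t)) z.re).symm
  have h2 := Measure.integral_comp_mul_left
    (fun t : ℝ => g (z.re + t) * kernel m (z - (z.re + t : ℝ))) z.im
  rw [abs_of_pos (inv_pos.2 hz), smul_eq_mul, ← h1, eq_comm, inv_mul_eq_iff_eq_mul₀ hz.ne'] at h2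
  rw [h2, extension, ← integral_const_mul z.im]
  congr 2
  ext s
  have hn : ‖z - (z.re + z.im * s : ℝ)‖ = z.im * √(1 + s ^ 2) := by
    rw [Complex.norm_eq_sqrt_sq_add_sq]
    have : (z - (z.re + z.im * s : ℝ)).re ^ 2 + (z - (z.re + z.im * s : ℝ)).im ^ 2 =
        z.im ^ 2 * (1 + s ^ 2) := by
      simp only [Complex.sub_re, Complex.sub_im, Complex.ofReal_re, Complex.ofReal_im]
      ring
    rw [this, Real.sqrt_mul (sq_nonneg _), Real.sqrt_sq hz.le]
  have hs : 0 < √(1 + s ^ 2) := Real.sqrt_pos.2 (by positivity)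
  have hs2 : √(1 + s ^ 2) ^ 2 = 1 + s ^ 2 := Real.sq_sqrt (by positivity)
  simp only [kernel, Pi.mul_apply, sinArg, invNorm, radial, hn, Complex.sub_im, Complex.ofReal_im,
    sub_zero]
  generalize √(1 + s ^ 2) = q at *
  rw [← hs2]
  field_simp

section Extension

variable {g : ℝ → ℝ} {M : ℝ}

theorem extension_nonneg (hg0 : ∀ x, 0 ≤ g x) (z : ℂ) : 0 ≤ extension m g z := by
  refine mul_nonneg (inv_nonneg.2 Real.pi_pos.le) (integral_nonneg fun s => ?_)
  exact mul_nonneg (mul_nonneg (by positivity) (profile_nonneg _ _)) (hg0 _)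

theorem norm_extension_integrand_le (hg0 : ∀ x, 0 ≤ g x) (hgM : ∀ x, g x ≤ M) (z : ℂ) (s : ℝ) :
    ‖(1 + s ^ 2)⁻¹ * profile m (z.im * √(1 + s ^ 2)) * g (z.re + z.im * s)‖ ≤
      (1 + s ^ 2)⁻¹ * M := by
  have h0 := profile_nonneg m (z.im * √(1 + s ^ 2))
  have h1 := hg0 (z.re + z.im * s)
  rw [Real.norm_of_nonneg (by positivity)]
  exact mul_le_mul (mul_le_of_le_one_right (by positivity) (profile_le_one _ _)) (hgM _) h1
    (by positivity)

theorem continuous_extension (hgc : Continuous g) (hg0 : ∀ x, 0 ≤ g x) (hgM : ∀ x, g x ≤ M) :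
    Continuous (extension m g) := by
  have hc := continuous_profile m
  have hi : Continuous fun s : ℝ => (1 + s ^ 2)⁻¹ :=
    Continuous.inv₀ (by fun_prop) fun s => by positivity
  refine continuous_const.mul (continuous_of_dominated (bound := fun s => (1 + s ^ 2)⁻¹ * M)
    (fun z => Continuous.aestronglyMeasurable (by fun_prop))
    (fun z => Eventually.of_forall fun s => norm_extension_integrand_le hg0 hgM z s)
    (integrable_inv_one_add_sq.mul_const M) (Eventually.of_forall fun s => ?_))
  have h1 := Complex.continuous_im
  have h2 := Complex.continuous_re
  fun_prop

theorem extension_le (hg0 : ∀ x, 0 ≤ g x) (hgM : ∀ x, g x ≤ M) (z : ℂ) :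
    extension m g z ≤ M := by
  have h := norm_integral_le_of_norm_le (μ := volume) (integrable_inv_one_add_sq.mul_const M)
    (Eventually.of_forall fun s => norm_extension_integrand_le (m := m) hg0 hgM z s)
  rw [integral_mul_const, integral_univ_inv_one_add_sq] at h
  have hpi := Real.pi_pos
  calc extension m g z ≤ Real.pi⁻¹ * (Real.pi * M) :=
        mul_le_mul_of_nonneg_left ((le_abs_self _).trans h) (inv_nonneg.2 hpi.le)
    _ = M := by field_simp

theorem extension_ofReal (x : ℝ) : extension m g x = g x := by
  have hpi := Real.pi_pos
  simp only [extension, Complex.ofReal_im, Complex.ofReal_re, zero_mul, add_zero]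
  rw [integral_mul_const, integral_mul_const, integral_univ_inv_one_add_sq]
  simp [profile]

theorem extension_decay (hm : 0 < m) (hgi : Integrable g) (hg0 : ∀ x, 0 ≤ g x) {z : ℂ}
    (hz : 1 ≤ z.im) :
    extension m g z ≤
      Real.pi⁻¹ * ((∫ t, g t) * (√(1 + 2 * m) * (Real.exp (-m * z.im) / √z.im))) := by
  have hz0 : 0 < z.im := by linarith
  rw [extension_eq_conv g hz0, ← integral_mul_const]
  refine mul_le_mul_of_nonneg_left ?_ (inv_nonneg.2 Real.pi_pos.le)
  refine integral_mono ((isTame_of_mem hm kernel_mem).integrable hgi hz0) (hgi.mul_const _)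
    fun t => mul_le_mul_of_nonneg_left ?_ (hg0 t)
  have h := kernel_le (z := z - t) hm (by simpa using hz)
  simpa using h

theorem contDiffOn_extension (hm : 0 < m) (hgi : Integrable g) :
    ContDiffOn ℝ (⊤ : ℕ∞) (extension m g) {z : ℂ | 0 < z.im} :=
  (contDiffOn_const.mul (contDiffOn_conv hgi (S := kernelAlgebra m)
    (fun _ hf => isTame_of_mem hm hf) (fun _ hf => exists_hasPartials_of_mem hm hf)
    kernel_mem)).congr fun _ hz => extension_eq_conv g hz

theorem exists_hasPartials_extension (hm : 0 < m) (hgi : Integrable g) (hg0 : ∀ x, 0 ≤ g x) :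
    ∃ u₁ u₂ u₁₁ u₁₂ u₂₁ u₂₂ : ℂ → ℝ, HasPartials (extension m g) u₁ u₂ ∧
      HasPartials u₁ u₁₁ u₁₂ ∧ HasPartials u₂ u₂₁ u₂₂ ∧
      ∀ z : ℂ, 0 < z.im → u₁₁ z + u₂₂ z ≤ m ^ 2 * extension m g z := by
  obtain ⟨f₁, h₁, f₂, h₂, f₁₁, h₁₁, f₁₂, h₁₂, f₂₁, h₂₁, f₂₂, h₂₂, d, d₁, d₂, hle⟩ :=
    exists_hasPartials_kernel hm
  have tame := fun {f} (hf : f ∈ kernelAlgebra m) => isTame_of_mem hm hf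
  refine ⟨_, _, _, _, _, _,
    ((d.conv hgi (tame kernel_mem) (tame h₁) (tame h₂)).smul Real.pi⁻¹).congr
      (fun z hz => extension_eq_conv g hz) (fun _ _ => rfl) (fun _ _ => rfl),
    (d₁.conv hgi (tame h₁) (tame h₁₁) (tame h₁₂)).smul Real.pi⁻¹,
    (d₂.conv hgi (tame h₂) (tame h₂₁) (tame h₂₂)).smul Real.pi⁻¹, fun z hz => ?_⟩
  have i₁ := (tame h₁₁).integrable hgi hz
  have i₂ := (tame h₂₂).integrable hgi hz
  have key : conv g f₁₁ z + conv g f₂₂ z ≤ m ^ 2 * conv g (kernel m) z := by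
    simp only [conv]
    rw [← integral_add i₁ i₂, ← integral_const_mul]
    refine integral_mono (i₁.add i₂)
      (((tame kernel_mem).integrable hgi hz).const_mul _) fun t => ?_
    have h := mul_le_mul_of_nonneg_left (hle (z - t) (by simpa using hz)) (hg0 t)
    simp only
    linarith
  rw [extension_eq_conv g hz]
  simp only [Pi.smul_apply, smul_eq_mul]
  have := mul_le_mul_of_nonneg_left key (inv_nonneg.2 Real.pi_pos.le)
  linarith

end Extension

end BarrierKernel

/-- **Half-plane nonlinear supersolution barrier.** Given `k, k' > 0` and a continuous,
nonnegative, integrable `g : ℝ → ℝ` with `g ≤ 1/(4k')`, there is `v`, smooth on the open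
upper half-plane and continuous on its closure, with `v ≥ 0`, `v ≥ g` on `ℝ`,
`Δv ≤ k v − k k' v²` on the half-plane, and `v(x+iy) ≤ C ‖g‖₁ e^{−2√k y}/√y` for
`y ≥ 1` and some `C > 0`. -/
theorem stmt_7 (k k' : ℝ) (hk : 0 < k) (hk' : 0 < k')
    (g : ℝ → ℝ) (hgc : Continuous g) (hg0 : ∀ x : ℝ, 0 ≤ g x)
    (hgi : MeasureTheory.Integrable g) (hgb : ∀ x : ℝ, g x ≤ 1 / (4 * k')) :
    ∃ v : ℂ → ℝ,
      ContDiffOn ℝ (⊤ : ℕ∞) v {z : ℂ | 0 < z.im} ∧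
      ContinuousOn v {z : ℂ | 0 ≤ z.im} ∧
      (∀ z : ℂ, 0 ≤ z.im → 0 ≤ v z) ∧
      (∀ x : ℝ, g x ≤ v (x : ℂ)) ∧
      (∀ z : ℂ, 0 < z.im → lap v z ≤ k * v z - k * k' * v z ^ 2) ∧
      ∃ C : ℝ, 0 < C ∧
        ∀ x y : ℝ, 1 ≤ y →
          v ((x : ℂ) + (y : ℂ) * Complex.I) ≤
            C * (∫ t : ℝ, |g t|) * Real.exp (-2 * Real.sqrt k * y) / Real.sqrt y := by
  set m := 2 * √k with hm_def
  have hm : 0 < m := by positivity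
  have hmk : m ^ 2 = 4 * k := by
    rw [hm_def, mul_pow, Real.sq_sqrt hk.le]
    norm_num
  set u := BarrierKernel.extension m g with hu
  have hu0 : ∀ z, 0 ≤ u z := BarrierKernel.extension_nonneg hg0
  have hub : ∀ z, k' * u z ≤ 1 / 4 := fun z => by
    have h := mul_le_mul_of_nonneg_left (BarrierKernel.extension_le (m := m) hg0 hgb z) hk'.le
    refine h.trans (le_of_eq ?_)
    field_simp
  have huc : Continuous u := BarrierKernel.continuous_extension hgc hg0 hgb
  have hus := BarrierKernel.contDiffOn_extension (m := m) hm hgi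
  refine ⟨(2 : ℝ) • u + (-(4 * k')) • (u * u), ?_, ?_, ?_, ?_, ?_, ?_⟩
  · exact (hus.const_smul (2 : ℝ)).add ((hus.mul hus).const_smul (-(4 * k')))
  · exact ((huc.const_smul (2 : ℝ)).add ((huc.mul huc).const_smul (-(4 * k')))).continuousOn
  · intro z _
    simp only [Pi.add_apply, Pi.smul_apply, Pi.mul_apply, smul_eq_mul]
    nlinarith [hu0 z, hub z, mul_nonneg (hu0 z) (sub_nonneg.2 (hub z))]
  · intro x
    have hx : u x = g x := BarrierKernel.extension_ofReal x
    have h1 := hub x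
    simp only [Pi.add_apply, Pi.smul_apply, Pi.mul_apply, smul_eq_mul]
    rw [hx] at h1 ⊢
    nlinarith [hg0 x, mul_nonneg (hg0 x) (sub_nonneg.2 h1)]
  · intro z hz
    obtain ⟨u₁, u₂, u₁₁, u₁₂, u₂₁, u₂₂, d, d₁, d₂, hle⟩ :=
      BarrierKernel.exists_hasPartials_extension hm hgi hg0
    rw [((d.smul 2).add ((d.mul d).smul (-(4 * k')))).lap_eq
      ((d₁.smul 2).add (((d₁.mul d).add (d.mul d₁)).smul (-(4 * k'))))
      ((d₂.smul 2).add (((d₂.mul d).add (d.mul d₂)).smul (-(4 * k')))) hz]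
    have hle := hle z hz
    rw [hmk] at hle
    simp only [Pi.add_apply, Pi.smul_apply, Pi.mul_apply, smul_eq_mul, ← hu] at hle ⊢
    have h0 := hu0 z
    have hb := hub z
    generalize u z = U at *
    have hpos : 0 ≤ 1 - 4 * k' * U := by linarith
    have e1 := mul_le_mul_of_nonneg_right hle hpos
    have e2 : 0 ≤ k' * (u₁ z ^ 2 + u₂ z ^ 2) := by positivity
    have e3 : 0 ≤ k * k' * U ^ 2 * (16 * (k' * U) * (1 - k' * U)) := by
      have : 0 ≤ 1 - k' * U := by linarith
      positivity
    nlinarith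
  · refine ⟨2 * Real.pi⁻¹ * √(1 + 2 * m), by positivity, fun x y hy => ?_⟩
    have hz : ((x : ℂ) + (y : ℂ) * Complex.I).im = y := by simp
    have h := BarrierKernel.extension_decay (z := (x : ℂ) + (y : ℂ) * Complex.I) hm hgi hg0
      (by rwa [hz])
    rw [hz, ← hu] at h
    simp only [Pi.add_apply, Pi.smul_apply, Pi.mul_apply, smul_eq_mul, abs_of_nonneg (hg0 _)]
    have e1 : -2 * √k * y = -m * y := by ring
    rw [e1]
    have e2 := mul_nonneg hk'.le (mul_self_nonneg (u ((x : ℂ) + (y : ℂ) * Complex.I)))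
    refine (by linarith : _ ≤ 2 * u ((x : ℂ) + (y : ℂ) * Complex.I)).trans
      ((mul_le_mul_of_nonneg_left h zero_le_two).trans (le_of_eq ?_))
    ring
end

section
/- Let B be the symmetric bilinear form on ℝ⁵ given by B(x,y) = x₁y₃ + x₂y₄ + x₃y₁ + x₄y₂ − x₅y₅. Let v₁, v₂, v₃, v₄ ∈ ℝ⁵ be a future-directed negative light-like configuration with 4 vectors, i.e.: B(v_i, v_i) = 0 for all i; B(v_i, v_{i+1}) = 0 for all i (indices mod 4); B(v₁, v₃) < 0 and B(v₂, v₄) < 0; and det(v_i, v_{i+1}, e₁ − e₃, e₂ − e₄, e₅) > 0 for all i (indices mod 4). Then there exist g ∈ SO₀(B) (the identity component of the group of linear automorphisms of ℝ⁵ preserving B) and positive reals μ₁, μ₂, μ₃, μ₄ such that g v₁ = μ₁ e₁, g v₂ = μ₂ e₂, g v₃ = −μ₃ e₃ and g v₄ = −μ₄ e₄. -/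
/-- The symmetric bilinear form `B(x,y) = x₁y₃ + x₂y₄ + x₃y₁ + x₄y₂ − x₅y₅` of
signature `(2,3)` on `ℝ⁵`. -/
def B5 (x y : Fin 5 → ℝ) : ℝ :=
  x 0 * y 2 + x 1 * y 3 + x 2 * y 0 + x 3 * y 1 - x 4 * y 4

/-- The standard basis vectors of `ℝ⁵`. -/
noncomputable def e5 (i : Fin 5) : Fin 5 → ℝ := Pi.single i 1

/-- The group `O(B)` of linear automorphisms of `ℝ⁵` preserving `B`, realized as the
set of matrices `A` with `B(Ax, Ay) = B(x,y)` for all `x, y`. -/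
def OB : Set (Matrix (Fin 5) (Fin 5) ℝ) :=
  {A | ∀ x y : Fin 5 → ℝ, B5 (A.mulVec x) (A.mulVec y) = B5 x y}

/-- The determinant of the `5×5` matrix with the given columns. -/
noncomputable def detCols (w : Fin 5 → Fin 5 → ℝ) : ℝ :=
  Matrix.det (Matrix.of fun i j => w j i)

open Matrix

/-- A continuous one-parameter family in `OB` through `1` stays in the path component of `1`. -/
theorem joinedIn_OB_one_of_family (f : ℝ → Matrix (Fin 5) (Fin 5) ℝ) (hf : Continuous f)
    (h0 : f 0 = 1) (hmem : ∀ t, f t ∈ OB) (t : ℝ) : JoinedIn OB 1 (f t) := by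
  refine JoinedIn.ofLine (f := fun s => f (s * t)) (by fun_prop) (by simp [h0]) (by simp) ?_
  rintro _ ⟨s, -, rfl⟩
  exact hmem _

theorem mul_mem_OB {A C : Matrix (Fin 5) (Fin 5) ℝ} (hA : A ∈ OB) (hC : C ∈ OB) :
    A * C ∈ OB := fun x y => by
  rw [← mulVec_mulVec, ← mulVec_mulVec, hA, hC]

theorem joinedIn_OB_mul {A C : Matrix (Fin 5) (Fin 5) ℝ} (hA : JoinedIn OB 1 A)
    (hC : JoinedIn OB 1 C) : JoinedIn OB 1 (A * C) := by
  obtain ⟨p, hp⟩ := hA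
  obtain ⟨q, hq⟩ := hC
  refine ⟨(p.mul q).cast (one_mul 1).symm rfl, fun t => ?_⟩
  exact mul_mem_OB (hp t) (hq t)

theorem joinedIn_OB_of_cos_sin (f : ℝ → ℝ → Matrix (Fin 5) (Fin 5) ℝ)
    (hf : Continuous fun p : ℝ × ℝ => f p.1 p.2) (h0 : f 1 0 = 1)
    (hmem : ∀ c s, c ^ 2 + s ^ 2 = 1 → f c s ∈ OB) {c s : ℝ} (h : c ^ 2 + s ^ 2 = 1) :
    JoinedIn OB 1 (f c s) := by
  have hn : ‖(⟨c, s⟩ : ℂ)‖ = 1 := by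
    rw [Complex.norm_def, Complex.normSq_mk, Real.sqrt_eq_one]
    linarith
  have hc := Complex.norm_mul_cos_arg ⟨c, s⟩
  have hs := Complex.norm_mul_sin_arg ⟨c, s⟩
  rw [hn, one_mul] at hc hs
  have := joinedIn_OB_one_of_family (fun t => f (Real.cos t) (Real.sin t))
    (hf.comp (by fun_prop : Continuous fun t : ℝ => (Real.cos t, Real.sin t))) (by simpa using h0)
    (fun t => hmem _ _ (Real.cos_sq_add_sin_sq t)) (Complex.arg ⟨c, s⟩)
  simpa [hc, hs] using this

/-- Any vector of the plane can be rotated onto the nonnegative half of the first axis. -/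
theorem exists_rotation_to_axis (a b : ℝ) :
    ∃ c s r : ℝ, c ^ 2 + s ^ 2 = 1 ∧ 0 ≤ r ∧ c * a - s * b = r ∧ s * a + c * b = 0 := by
  refine ⟨Real.cos (Complex.arg ⟨a, b⟩), -Real.sin (Complex.arg ⟨a, b⟩), ‖(⟨a, b⟩ : ℂ)‖,
    ?_, norm_nonneg _, ?_, ?_⟩
  · rw [neg_sq, Real.cos_sq_add_sin_sq]
  all_goals
    have hc := Complex.norm_mul_cos_arg ⟨a, b⟩
    have hs := Complex.norm_mul_sin_arg ⟨a, b⟩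
    have h1 := Real.cos_sq_add_sin_sq (Complex.arg ⟨a, b⟩)
    dsimp only at hc hs
  · linear_combination ‖(⟨a, b⟩ : ℂ)‖ * h1 - Real.cos (Complex.arg ⟨a, b⟩) * hc
      - Real.sin (Complex.arg ⟨a, b⟩) * hs
  · linear_combination Real.sin (Complex.arg ⟨a, b⟩) * hc - Real.cos (Complex.arg ⟨a, b⟩) * hs

/-- The rotation of the positive plane with coordinates `x₁ + x₃`, `x₂ + x₄`. -/
noncomputable def posRotation (c s : ℝ) : Matrix (Fin 5) (Fin 5) ℝ :=
  !![(c + 1) / 2, -s / 2, (c - 1) / 2, -s / 2, 0;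
     s / 2, (c + 1) / 2, s / 2, (c - 1) / 2, 0;
     (c - 1) / 2, -s / 2, (c + 1) / 2, -s / 2, 0;
     s / 2, (c - 1) / 2, s / 2, (c + 1) / 2, 0;
     0, 0, 0, 0, 1]

/-- The rotation of the negative plane with coordinates `x₁ - x₃`, `x₂ - x₄`. -/
noncomputable def negRotation (c s : ℝ) : Matrix (Fin 5) (Fin 5) ℝ :=
  !![(1 + c) / 2, -s / 2, (1 - c) / 2, s / 2, 0;
     s / 2, (1 + c) / 2, -s / 2, (1 - c) / 2, 0;
     (1 - c) / 2, s / 2, (1 + c) / 2, -s / 2, 0;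
     -s / 2, (1 - c) / 2, s / 2, (1 + c) / 2, 0;
     0, 0, 0, 0, 1]

/-- The rotation of the negative plane with coordinates `x₂ - x₄`, `√2 x₅`. -/
noncomputable def negRotation' (c s : ℝ) : Matrix (Fin 5) (Fin 5) ℝ :=
  !![1, 0, 0, 0, 0;
     0, (1 + c) / 2, 0, (1 - c) / 2, -s * √2 / 2;
     0, 0, 1, 0, 0;
     0, (1 - c) / 2, 0, (1 + c) / 2, s * √2 / 2;
     0, s * √2 / 2, 0, -s * √2 / 2, c]

/-- The unipotent element `x₁ ↦ x₁ + t x₂`, `x₄ ↦ x₄ - t x₃`. -/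
def leviShear (t : ℝ) : Matrix (Fin 5) (Fin 5) ℝ :=
  !![1, t, 0, 0, 0; 0, 1, 0, 0, 0; 0, 0, 1, 0, 0; 0, 0, -t, 1, 0; 0, 0, 0, 0, 1]

/-- The unipotent element fixing `e₁`, `e₂`, `e₄` and sending `e₃` to `e₃ + t e₅ + (t²/2) e₁`. -/
noncomputable def unipotentFst (t : ℝ) : Matrix (Fin 5) (Fin 5) ℝ :=
  !![1, 0, t ^ 2 / 2, 0, t; 0, 1, 0, 0, 0; 0, 0, 1, 0, 0; 0, 0, 0, 1, 0; 0, 0, t, 0, 1]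

/-- The unipotent element fixing `e₁`, `e₂`, `e₃` and sending `e₄` to `e₄ + t e₅ + (t²/2) e₂`. -/
noncomputable def unipotentSnd (t : ℝ) : Matrix (Fin 5) (Fin 5) ℝ :=
  !![1, 0, 0, 0, 0; 0, 1, 0, t ^ 2 / 2, t; 0, 0, 1, 0, 0; 0, 0, 0, 1, 0; 0, 0, 0, t, 1]

/-- The unipotent element sending `e₃` to `e₃ + t e₂` and `e₄` to `e₄ - t e₁`. -/
def unipotentSkew (t : ℝ) : Matrix (Fin 5) (Fin 5) ℝ :=
  !![1, 0, 0, -t, 0; 0, 1, t, 0, 0; 0, 0, 1, 0, 0; 0, 0, 0, 1, 0; 0, 0, 0, 0, 1]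

theorem posRotation_mulVec (c s : ℝ) (x : Fin 5 → ℝ) : posRotation c s *ᵥ x =
    ![((c + 1) * x 0 - s * x 1 + (c - 1) * x 2 - s * x 3) / 2,
      (s * x 0 + (c + 1) * x 1 + s * x 2 + (c - 1) * x 3) / 2,
      ((c - 1) * x 0 - s * x 1 + (c + 1) * x 2 - s * x 3) / 2,
      (s * x 0 + (c - 1) * x 1 + s * x 2 + (c + 1) * x 3) / 2, x 4] := by
  ext i; fin_cases i <;> simp [posRotation, mulVec, dotProduct, Fin.sum_univ_five] <;> ring

theorem negRotation_mulVec (c s : ℝ) (x : Fin 5 → ℝ) : negRotation c s *ᵥ x =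
    ![((1 + c) * x 0 - s * x 1 + (1 - c) * x 2 + s * x 3) / 2,
      (s * x 0 + (1 + c) * x 1 - s * x 2 + (1 - c) * x 3) / 2,
      ((1 - c) * x 0 + s * x 1 + (1 + c) * x 2 - s * x 3) / 2,
      (-s * x 0 + (1 - c) * x 1 + s * x 2 + (1 + c) * x 3) / 2, x 4] := by
  ext i; fin_cases i <;> simp [negRotation, mulVec, dotProduct, Fin.sum_univ_five] <;> ring

theorem negRotation'_mulVec (c s : ℝ) (x : Fin 5 → ℝ) : negRotation' c s *ᵥ x =
    ![x 0, ((1 + c) * x 1 + (1 - c) * x 3 - s * √2 * x 4) / 2, x 2,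
      ((1 - c) * x 1 + (1 + c) * x 3 + s * √2 * x 4) / 2,
      s * √2 / 2 * (x 1 - x 3) + c * x 4] := by
  ext i; fin_cases i <;> simp [negRotation', mulVec, dotProduct, Fin.sum_univ_five] <;> ring

theorem leviShear_mulVec (t : ℝ) (x : Fin 5 → ℝ) : leviShear t *ᵥ x =
    ![x 0 + t * x 1, x 1, x 2, x 3 - t * x 2, x 4] := by
  ext i; fin_cases i <;> simp [leviShear, mulVec, dotProduct, Fin.sum_univ_five]; ring

theorem unipotentFst_mulVec (t : ℝ) (x : Fin 5 → ℝ) : unipotentFst t *ᵥ x =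
    ![x 0 + t ^ 2 / 2 * x 2 + t * x 4, x 1, x 2, x 3, x 4 + t * x 2] := by
  ext i; fin_cases i <;> simp [unipotentFst, mulVec, dotProduct, Fin.sum_univ_five]; ring

theorem unipotentSnd_mulVec (t : ℝ) (x : Fin 5 → ℝ) : unipotentSnd t *ᵥ x =
    ![x 0, x 1 + t ^ 2 / 2 * x 3 + t * x 4, x 2, x 3, x 4 + t * x 3] := by
  ext i; fin_cases i <;> simp [unipotentSnd, mulVec, dotProduct, Fin.sum_univ_five]; ring

theorem unipotentSkew_mulVec (t : ℝ) (x : Fin 5 → ℝ) : unipotentSkew t *ᵥ x =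
    ![x 0 - t * x 3, x 1 + t * x 2, x 2, x 3, x 4] := by
  ext i; fin_cases i <;> simp [unipotentSkew, mulVec, dotProduct, Fin.sum_univ_five]; ring

theorem joinedIn_posRotation {c s : ℝ} (h : c ^ 2 + s ^ 2 = 1) :
    JoinedIn OB 1 (posRotation c s) := by
  refine joinedIn_OB_of_cos_sin posRotation ?_ ?_ ?_ h
  · refine continuous_matrix fun i j => ?_
    fin_cases i <;> fin_cases j <;> simp [posRotation] <;> fun_prop
  · ext i j; fin_cases i <;> fin_cases j <;> simp [posRotation]
  · intro c s h x y
    simp only [posRotation_mulVec, B5, cons_val]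
    linear_combination ((x 0 + x 2) * (y 0 + y 2) + (x 1 + x 3) * (y 1 + y 3)) / 2 * h

theorem joinedIn_negRotation {c s : ℝ} (h : c ^ 2 + s ^ 2 = 1) :
    JoinedIn OB 1 (negRotation c s) := by
  refine joinedIn_OB_of_cos_sin negRotation ?_ ?_ ?_ h
  · refine continuous_matrix fun i j => ?_
    fin_cases i <;> fin_cases j <;> simp [negRotation] <;> fun_prop
  · ext i j; fin_cases i <;> fin_cases j <;> simp [negRotation]
  · intro c s h x y
    simp only [negRotation_mulVec, B5, cons_val]
    linear_combination -((x 0 - x 2) * (y 0 - y 2) + (x 1 - x 3) * (y 1 - y 3)) / 2 * h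

theorem joinedIn_negRotation' {c s : ℝ} (h : c ^ 2 + s ^ 2 = 1) :
    JoinedIn OB 1 (negRotation' c s) := by
  refine joinedIn_OB_of_cos_sin negRotation' ?_ ?_ ?_ h
  · refine continuous_matrix fun i j => ?_
    fin_cases i <;> fin_cases j <;> simp [negRotation'] <;> fun_prop
  · ext i j; fin_cases i <;> fin_cases j <;> simp [negRotation']
  · intro c s h x y
    have h2 : √2 ^ 2 = 2 := Real.sq_sqrt (by norm_num)
    simp only [negRotation'_mulVec, B5, cons_val]
    linear_combination (-(x 1 - x 3) * (y 1 - y 3) / 2 - x 4 * y 4) * h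
      - s ^ 2 * ((x 1 - x 3) * (y 1 - y 3) / 4 + x 4 * y 4 / 2) * h2

theorem joinedIn_leviShear (t : ℝ) : JoinedIn OB 1 (leviShear t) := by
  refine joinedIn_OB_one_of_family leviShear ?_ ?_ ?_ t
  · refine continuous_matrix fun i j => ?_
    fin_cases i <;> fin_cases j <;> simp [leviShear] <;> fun_prop
  · ext i j; fin_cases i <;> fin_cases j <;> simp [leviShear]
  · intro t x y
    simp only [leviShear_mulVec, B5, cons_val]
    ring

theorem joinedIn_unipotentFst (t : ℝ) : JoinedIn OB 1 (unipotentFst t) := by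
  refine joinedIn_OB_one_of_family unipotentFst ?_ ?_ ?_ t
  · refine continuous_matrix fun i j => ?_
    fin_cases i <;> fin_cases j <;> simp [unipotentFst] <;> fun_prop
  · ext i j; fin_cases i <;> fin_cases j <;> simp [unipotentFst]
  · intro t x y
    simp only [unipotentFst_mulVec, B5, cons_val]
    ring

theorem joinedIn_unipotentSnd (t : ℝ) : JoinedIn OB 1 (unipotentSnd t) := by
  refine joinedIn_OB_one_of_family unipotentSnd ?_ ?_ ?_ t
  · refine continuous_matrix fun i j => ?_
    fin_cases i <;> fin_cases j <;> simp [unipotentSnd] <;> fun_prop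
  · ext i j; fin_cases i <;> fin_cases j <;> simp [unipotentSnd]
  · intro t x y
    simp only [unipotentSnd_mulVec, B5, cons_val]
    ring

theorem joinedIn_unipotentSkew (t : ℝ) : JoinedIn OB 1 (unipotentSkew t) := by
  refine joinedIn_OB_one_of_family unipotentSkew ?_ ?_ ?_ t
  · refine continuous_matrix fun i j => ?_
    fin_cases i <;> fin_cases j <;> simp [unipotentSkew] <;> fun_prop
  · ext i j; fin_cases i <;> fin_cases j <;> simp [unipotentSkew]
  · intro t x y
    simp only [unipotentSkew_mulVec, B5, cons_val]
    ring

/-- A configuration of four isotropic vectors, cyclically orthogonal, with negative diagonals. -/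
structure NegLightlike (v : Fin 4 → Fin 5 → ℝ) : Prop where
  iso : ∀ i, B5 (v i) (v i) = 0
  consec : ∀ i, B5 (v i) (v (i + 1)) = 0
  neg_fst : B5 (v 0) (v 2) < 0
  neg_snd : B5 (v 1) (v 3) < 0

theorem NegLightlike.map {v : Fin 4 → Fin 5 → ℝ} (hv : NegLightlike v)
    {A : Matrix (Fin 5) (Fin 5) ℝ} (hA : A ∈ OB) : NegLightlike fun i => A *ᵥ v i where
  iso i := by rw [hA]; exact hv.iso i
  consec i := by rw [hA]; exact hv.consec i
  neg_fst := by rw [hA]; exact hv.neg_fst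
  neg_snd := by rw [hA]; exact hv.neg_snd

/-- The configuration can be moved to the standard quadrilateral by an element of the identity
component. -/
def IsStandardizable (v : Fin 4 → Fin 5 → ℝ) : Prop :=
  ∃ g : Matrix (Fin 5) (Fin 5) ℝ, JoinedIn OB 1 g ∧
    ∃ μ : Fin 4 → ℝ, (∀ i, 0 < μ i) ∧
      g *ᵥ v 0 = μ 0 • e5 0 ∧ g *ᵥ v 1 = μ 1 • e5 1 ∧
      g *ᵥ v 2 = -(μ 2 • e5 2) ∧ g *ᵥ v 3 = -(μ 3 • e5 3)

theorem IsStandardizable.of_map {v : Fin 4 → Fin 5 → ℝ} {A : Matrix (Fin 5) (Fin 5) ℝ}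
    (hA : JoinedIn OB 1 A) (h : IsStandardizable fun i => A *ᵥ v i) : IsStandardizable v := by
  obtain ⟨g, hg, μ, hμ, h0, h1, h2, h3⟩ := h
  simp only [mulVec_mulVec] at h0 h1 h2 h3
  exact ⟨g * A, joinedIn_OB_mul hg hA, μ, hμ, h0, h1, h2, h3⟩

namespace NegLightlike

variable {v : Fin 4 → Fin 5 → ℝ}

theorem isStandardizable_of_fifth_eq_zero (hv : NegLightlike v) {a d : ℝ} (ha : 0 < a)
    (hd : 0 < d) (h0 : v 0 = ![a, 0, 0, 0, 0]) (h1 : v 1 = ![0, d, 0, 0, 0])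
    (h2 : v 2 4 = 0) (h3 : v 3 4 = 0) : IsStandardizable v := by
  have n0 := hv.neg_fst
  have n1 := hv.neg_snd
  have o1 := hv.consec 1
  have o2 := hv.consec 2
  have o3 := hv.consec 3
  have i2 := hv.iso 2
  have i3 := hv.iso 3
  simp only [show (1 : Fin 4) + 1 = 2 from rfl, show (2 : Fin 4) + 1 = 3 from rfl,
    show (3 : Fin 4) + 1 = 0 from rfl] at o1 o2 o3
  simp [B5, h0, h1, h2, h3, hd.ne', ha.ne'] at n0 n1 o1 o2 o3 i2 i3
  have n2 : v 2 2 < 0 := by nlinarith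
  have n3 : v 3 3 < 0 := by nlinarith
  simp only [o1, o3, mul_zero, zero_mul, add_zero, zero_add] at i2 i3 o2
  have z2 : v 2 0 = 0 := (mul_eq_zero.1 (by linarith : v 2 0 * v 2 2 = 0)).resolve_right n2.ne
  have z3 : v 3 1 = 0 := (mul_eq_zero.1 (by linarith : v 3 1 * v 3 3 = 0)).resolve_right n3.ne
  refine ⟨_, joinedIn_unipotentSkew (-v 2 1 / v 2 2), ![a, d, -v 2 2, -v 3 3], ?_, ?_, ?_, ?_, ?_⟩
  · intro i; fin_cases i <;> simp <;> linarith
  all_goals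
    rw [unipotentSkew_mulVec]
    ext i
    fin_cases i <;> simp [e5, h0, h1, h2, h3, o1, o3, z2, z3]
  · field_simp [n2.ne]
    ring
  · field_simp [n2.ne]
    linarith

theorem isStandardizable_of_axes (hv : NegLightlike v) {a d : ℝ} (ha : 0 < a)
    (hd : 0 < d) (h0 : v 0 = ![a, 0, 0, 0, 0]) (h1 : v 1 = ![0, d, 0, 0, 0]) :
    IsStandardizable v := by
  have n0 := hv.neg_fst
  have n1 := hv.neg_snd
  have o1 := hv.consec 1
  have o3 := hv.consec 3
  simp only [show (1 : Fin 4) + 1 = 2 from rfl, show (3 : Fin 4) + 1 = 0 from rfl] at o1 o3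
  simp [B5, h0, h1, hd.ne', ha.ne'] at n0 n1 o1 o3
  have n2 : v 2 2 ≠ 0 := by rintro h; simp [h] at n0
  have n3 : v 3 3 ≠ 0 := by rintro h; simp [h] at n1
  have j1 := joinedIn_unipotentFst (-v 2 4 / v 2 2)
  have j2 := joinedIn_unipotentSnd (-v 3 4 / v 3 3)
  refine .of_map j1 (.of_map j2 ?_)
  refine ((hv.map j1.target_mem).map j2.target_mem).isStandardizable_of_fifth_eq_zero
    ha hd ?_ ?_ ?_ ?_
  · simp [unipotentFst_mulVec, unipotentSnd_mulVec, h0]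
  · simp [unipotentFst_mulVec, unipotentSnd_mulVec, h1]
  · simp [unipotentFst_mulVec, unipotentSnd_mulVec, o1, n2]
  · simp [unipotentFst_mulVec, unipotentSnd_mulVec, o3, n3]

theorem isStandardizable_of_fst_axis (hv : NegLightlike v) {a : ℝ} (ha : 0 < a)
    (h0 : v 0 = ![a, 0, 0, 0, 0]) (hd : 0 < v 1 1 + v 1 3) : IsStandardizable v := by
  have o0 := hv.consec 0
  have i1 := hv.iso 1
  simp only [show (0 : Fin 4) + 1 = 1 from rfl] at o0
  simp [B5, h0, ha.ne'] at o0
  simp [B5, o0] at i1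
  have hr : √2 ^ 2 = 2 := Real.sq_sqrt (by norm_num)
  obtain ⟨c, s, r, hcs, hr0, hr1, hr2⟩ := exists_rotation_to_axis (v 1 1 - v 1 3) (√2 * v 1 4)
  have hrd : r = v 1 1 + v 1 3 := by
    refine (sq_eq_sq₀ hr0 hd.le).1 ?_
    rw [← hr1]
    linear_combination ((v 1 1 - v 1 3) ^ 2 + (√2 * v 1 4) ^ 2) * hcs
      - (s * (v 1 1 - v 1 3) + c * (√2 * v 1 4)) * hr2 - 2 * i1 + v 1 4 ^ 2 * hr
  have j1 := joinedIn_negRotation' hcs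
  have j2 := joinedIn_leviShear (-v 1 0 / (v 1 1 + v 1 3))
  have hw : negRotation' c s *ᵥ v 1 = ![v 1 0, v 1 1 + v 1 3, 0, 0, 0] := by
    rw [negRotation'_mulVec]
    ext i
    fin_cases i <;> simp
    · linarith
    · exact o0
    · linarith
    · linear_combination √2 / 2 * hr2 - c * v 1 4 / 2 * hr
  refine .of_map j1 (.of_map j2 ?_)
  refine ((hv.map j1.target_mem).map j2.target_mem).isStandardizable_of_axes ha hd ?_ ?_
  · simp [leviShear_mulVec, negRotation'_mulVec, h0]
  · simp [hw, leviShear_mulVec, hd.ne']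

theorem isStandardizable (hv : NegLightlike v)
    (hD : 0 < (v 0 0 + v 0 2) * (v 1 1 + v 1 3) - (v 0 1 + v 0 3) * (v 1 0 + v 1 2)) :
    IsStandardizable v := by
  have hr2 : √2 ^ 2 = 2 := Real.sq_sqrt (by norm_num)
  have i0 := hv.iso 0
  simp only [B5] at i0
  obtain ⟨c, s, r, hcs, hr, hr1, hr0⟩ := exists_rotation_to_axis (v 0 0 + v 0 2) (v 0 1 + v 0 3)
  obtain ⟨c', s', r', hcs', hr', hr1', hr0'⟩ :=
    exists_rotation_to_axis (v 0 1 - v 0 3) (√2 * v 0 4)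
  obtain ⟨c'', s'', r'', hcs'', hr'', hr1'', hr0''⟩ :=
    exists_rotation_to_axis (v 0 0 - v 0 2) r'
  have j1 := joinedIn_posRotation hcs
  have j2 := joinedIn_negRotation' hcs'
  have j3 := joinedIn_negRotation hcs''
  set q := s * (v 1 0 + v 1 2) + c * (v 1 1 + v 1 3) with hq
  have hrq : r * q = (v 0 0 + v 0 2) * (v 1 1 + v 1 3) - (v 0 1 + v 0 3) * (v 1 0 + v 1 2) := by
    rw [hq, ← hr1]
    linear_combination ((v 0 0 + v 0 2) * (v 1 1 + v 1 3) - (v 0 1 + v 0 3) * (v 1 0 + v 1 2)) * hcs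
      + (c * (v 1 0 + v 1 2) - s * (v 1 1 + v 1 3)) * hr0
  rw [← hrq] at hD
  have hrpos : 0 < r := hr.lt_of_ne (by rintro rfl; simp at hD)
  have hrr : r'' = r := by
    refine (sq_eq_sq₀ hr'' hr).1 ?_
    have e1 : r ^ 2 = (v 0 0 + v 0 2) ^ 2 + (v 0 1 + v 0 3) ^ 2 := by
      rw [← hr1]
      linear_combination ((v 0 0 + v 0 2) ^ 2 + (v 0 1 + v 0 3) ^ 2) * hcs
        - (s * (v 0 0 + v 0 2) + c * (v 0 1 + v 0 3)) * hr0
    have e2 : r' ^ 2 = (v 0 1 - v 0 3) ^ 2 + (√2 * v 0 4) ^ 2 := by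
      rw [← hr1']
      linear_combination ((v 0 1 - v 0 3) ^ 2 + (√2 * v 0 4) ^ 2) * hcs'
        - (s' * (v 0 1 - v 0 3) + c' * (√2 * v 0 4)) * hr0'
    have e3 : r'' ^ 2 = (v 0 0 - v 0 2) ^ 2 + r' ^ 2 := by
      rw [← hr1'']
      linear_combination ((v 0 0 - v 0 2) ^ 2 + r' ^ 2) * hcs''
        - (s'' * (v 0 0 - v 0 2) + c'' * r') * hr0''
    linear_combination e3 + e2 - e1 - 2 * i0 + v 0 4 ^ 2 * hr2
  refine .of_map j1 (.of_map j2 (.of_map j3 ?_))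
  refine (((hv.map j1.target_mem).map j2.target_mem).map j3.target_mem).isStandardizable_of_fst_axis
    hrpos ?_ ?_
  · have hw : negRotation' c' s' *ᵥ (posRotation c s *ᵥ v 0) =
        ![(r + (v 0 0 - v 0 2)) / 2, r' / 2, (r - (v 0 0 - v 0 2)) / 2, -r' / 2, 0] := by
      rw [posRotation_mulVec, negRotation'_mulVec]
      ext i
      fin_cases i <;> simp
      · linarith
      · linarith
      · linarith
      · linarith
      · linear_combination √2 / 2 * hr0' - c' * v 0 4 / 2 * hr2
    rw [hw, negRotation_mulVec]
    ext i
    fin_cases i <;> simp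
    · linarith
    · linarith
    · linarith
    · linarith
  · have hqpos : 0 < q := pos_of_mul_pos_right hD hr
    simp only [posRotation_mulVec, negRotation'_mulVec, negRotation_mulVec, cons_val]
    convert hqpos using 1
    rw [hq]
    ring

end NegLightlike

theorem detCols_fst_snd (x y : Fin 5 → ℝ) :
    detCols ![x, y, e5 0 - e5 2, e5 1 - e5 3, e5 4] =
      (x 0 + x 2) * (y 1 + y 3) - (x 1 + x 3) * (y 0 + y 2) := by
  simp [detCols, e5, det_succ_row_zero, Fin.sum_univ_succ, Fin.succAbove, Pi.single_apply]
  ring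

/-- **Uniqueness of the future-directed negative light-like quadrilateral.**
Any future-directed negative light-like configuration of 4 isotropic vectors can be
moved by an element of the identity component `SO₀(B)` to `(μ₁e₁, μ₂e₂, −μ₃e₃, −μ₄e₄)`
with `μᵢ > 0`. -/
theorem stmt_14 (v : Fin 4 → Fin 5 → ℝ)
    (hiso : ∀ i : Fin 4, B5 (v i) (v i) = 0)
    (hconsec : ∀ i : Fin 4, B5 (v i) (v (i + 1)) = 0)
    (hneg : B5 (v 0) (v 2) < 0 ∧ B5 (v 1) (v 3) < 0)
    (hfut : ∀ i : Fin 4,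
      0 < detCols ![v i, v (i + 1), e5 0 - e5 2, e5 1 - e5 3, e5 4]) :
    ∃ g : Matrix (Fin 5) (Fin 5) ℝ, JoinedIn OB 1 g ∧
      ∃ μ : Fin 4 → ℝ, (∀ i, 0 < μ i) ∧
        g.mulVec (v 0) = μ 0 • e5 0 ∧
        g.mulVec (v 1) = μ 1 • e5 1 ∧
        g.mulVec (v 2) = -(μ 2 • e5 2) ∧
        g.mulVec (v 3) = -(μ 3 • e5 3) := by
  have hD := hfut 0
  rw [show (0 : Fin 4) + 1 = 1 from rfl, detCols_fst_snd] at hD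
  exact NegLightlike.isStandardizable ⟨hiso, hconsec, hneg.1, hneg.2⟩ hD
end
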